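/- arXiv:2004.01080 — 3 statements merged into one kernel-verified Lean document; each statement's English description precedes it below -/
import Mathlib

section
/- Fix an integer h ≥ 2. There is a constant C_h such that for all real x ≥ 2, the number of primes p ≤ x with p + h also prime is at most C_h · x / (log x)². -/
/-!
The set of `n ≤ N` with `n` and `n + h` both prime is sifted with Selberg's `Λ²` sieve, applied to
the values `n * (n + h)` and to the primes `p ≤ z` not dividing `2 * h`. Such a prime forbids
exactly two residue classes of `n`, so the density is `ν d = ρ d / d` with `ρ p = 2`, and by
periodicity the remainder at `d` is at most `d` in absolute value (`count_bound`).

Mathlib diagonalises the main term of a `Λ²` sieve. With `g` the Selberg terms, the optimal weights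
`selW` make that main term equal to `1 / S`, where `S = ∑ g l` over the `l ≤ z` dividing the product
of the sifting primes. The trivial bound `|w d| ≤ 1 / ν d ≤ d ≤ z` already shows that the error term
is at most `z ^ 8` (`selberg_bound`); this loss is harmless since `z` is taken to be a small power
of `x`.

It remains to see that `S ≫ (log z) ^ 2`. Put `M = 2 * h`. Since `g d ≥ ν d = τ d / d`, it is enough
to bound below the sum of `τ d / d` over squarefree `d ≤ y ^ 2` coprime to `M`. Splitting a pair of
squarefree numbers according to its gcd bounds this sum below by half the square of `∑ 1 / s` over
squarefree `s ≤ y` coprime to `M` (`sq_sum_le`). Splitting off the largest square factor compares the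
latter with `∑ 1 / a` over all `a ≤ y` coprime to `M` (`sum_coprime_le`), which is `≫ log y` because
of the terms `a ≡ 1 (mod M)` alone (`log_le_sum_coprime`). Finally `y = M * K`, `z = y ^ 2` and
`K = ⌊x ^ (1 / 32)⌋` give an error `O(√x)`.
-/

/-! ### Residues with `d ∣ r * (r + h)` -/

/-- The number `ρ(d)` of residues `r` modulo `d` with `d ∣ r * (r + h)`; it is `0` at `d = 0`. -/
def rho (h d : ℕ) : ℕ := Finset.card {r ∈ Finset.range d | d ∣ r * (r + h)}

lemma dvd_mod_iff (h d r : ℕ) : d ∣ (r % d) * (r % d + h) ↔ d ∣ r * (r + h) := by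
  apply Nat.ModEq.dvd_iff _ dvd_rfl
  exact (Nat.mod_modEq r d).mul ((Nat.mod_modEq r d).add_right h)

lemma rho_eq_count (h d : ℕ) : rho h d = Nat.count (fun r => d ∣ r * (r + h)) d := by
  rw [Nat.count_eq_card_filter_range]; rfl

lemma rho_le (h d : ℕ) : rho h d ≤ d := by
  rw [rho_eq_count]; exact Nat.count_le _

lemma rho_pos (h : ℕ) {d : ℕ} (hd : d ≠ 0) : 1 ≤ rho h d :=
  Finset.card_pos.2 ⟨0, by simp; omega⟩

lemma rho_one (h : ℕ) : rho h 1 = 1 := by simp [rho]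

/-- Multiplicativity of `ρ`, by the Chinese remainder theorem. -/
lemma rho_mul (h : ℕ) {m n : ℕ} (hm : m ≠ 0) (hn : n ≠ 0) (hmn : m.Coprime n) :
    rho h (m * n) = rho h m * rho h n := by
  unfold rho
  rw [← Finset.card_product]
  have hdvd : ∀ r, m * n ∣ r * (r + h) ↔ m ∣ r * (r + h) ∧ n ∣ r * (r + h) := fun r =>
    ⟨fun H => ⟨dvd_of_mul_right_dvd H, dvd_of_mul_left_dvd H⟩,
      fun H => hmn.mul_dvd_of_dvd_of_dvd H.1 H.2⟩
  refine Finset.card_nbij (fun r => (r % m, r % n)) ?_ ?_ ?_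
  · intro r hr
    simp only [Finset.mem_coe, Finset.mem_filter, Finset.mem_range, Finset.mem_product,
      dvd_mod_iff] at hr ⊢
    have := (hdvd r).1 hr.2
    exact ⟨⟨Nat.mod_lt _ (by omega), this.1⟩, ⟨Nat.mod_lt _ (by omega), this.2⟩⟩
  · intro a ha b hb hab
    simp only [Finset.mem_coe, Finset.mem_filter, Finset.mem_range, Prod.mk.injEq] at ha hb hab
    exact Nat.ModEq.eq_of_lt_of_lt ((Nat.modEq_and_modEq_iff_modEq_mul hmn).1 hab) ha.1 hb.1
  · rintro ⟨a, b⟩ hab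
    simp only [Finset.mem_coe, Finset.mem_filter, Finset.mem_range, Finset.mem_product] at hab
    obtain ⟨⟨ha, ha'⟩, hb, hb'⟩ := hab
    have e1 := (Nat.chineseRemainder hmn a b).2.1
    have e2 := (Nat.chineseRemainder hmn a b).2.2
    have e3 := Nat.chineseRemainder_lt_mul hmn a b hm hn
    set r : ℕ := (Nat.chineseRemainder hmn a b).1
    have f1 : r % m = a := Eq.trans e1 (Nat.mod_eq_of_lt ha)
    have f2 : r % n = b := Eq.trans e2 (Nat.mod_eq_of_lt hb)
    refine ⟨r, ?_, by simp [f1, f2]⟩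
    simp only [Finset.mem_coe, Finset.mem_filter, Finset.mem_range]
    refine ⟨e3, (hdvd r).2 ⟨?_, ?_⟩⟩
    · rwa [← dvd_mod_iff, f1]
    · rwa [← dvd_mod_iff, f2]

/-- The two roots of `r * (r + h)` modulo `p` are `0` and `-h`. -/
lemma rho_prime {h p : ℕ} (hp : p.Prime) (hph : ¬ p ∣ h) : rho h p = 2 := by
  have hm : h % p ≠ 0 := fun H => hph (Nat.dvd_of_mod_eq_zero H)
  have hlt := Nat.mod_lt h hp.pos
  have : {r ∈ Finset.range p | p ∣ r * (r + h)} = {0, p - h % p} := by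
    ext r
    simp only [Finset.mem_filter, Finset.mem_range, Finset.mem_insert, Finset.mem_singleton,
      hp.dvd_mul]
    have key : p ∣ r + h ↔ p ∣ r + h % p := by
      rw [Nat.dvd_iff_mod_eq_zero, Nat.dvd_iff_mod_eq_zero]; simp [Nat.add_mod]
    rw [key]
    constructor
    · rintro ⟨h1, h2 | h2⟩
      · left; exact Nat.eq_zero_of_dvd_of_lt h2 h1
      · right
        obtain ⟨k, hk⟩ := h2
        have : k = 1 := by
          have : k < 2 := by
            by_contra! H
            have : p * 2 ≤ p * k := Nat.mul_le_mul_left _ H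
            omega
          interval_cases k <;> omega
        subst this; omega
    · rintro (rfl | rfl)
      · exact ⟨hp.pos, by simp⟩
      · refine ⟨by omega, Or.inr ?_⟩
        rw [Nat.sub_add_cancel hlt.le]
  unfold rho
  rw [this, Finset.card_pair (by omega)]

/-- The condition `d ∣ r * (r + h)` is periodic in `r` with period `d`, so only an incomplete final
period contributes to the discrepancy. -/
lemma count_bound (h N : ℕ) {d : ℕ} (hd : d ≠ 0) :
    |(Nat.count (fun r => d ∣ r * (r + h)) N : ℝ) - (rho h d : ℝ) / d * N| ≤ d := by
  set P : ℕ → Prop := fun r => d ∣ r * (r + h)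
  have hper : ∀ q k, P (q * d + k) ↔ P k := fun q k => by
    change d ∣ _ ↔ d ∣ _
    rw [← dvd_mod_iff, Nat.mul_add_mod', dvd_mod_iff]
  have hq : ∀ q k, Nat.count P (q * d + k) = q * rho h d + Nat.count P k := by
    intro q k
    induction q with
    | zero => simp
    | succ q ih =>
      have : (q + 1) * d + k = d + (q * d + k) := by ring
      rw [this, Nat.count_add]
      have e : (fun k => P (d + k)) = P := by
        ext k; simpa using hper 1 k
      simp only [e, ih, ← rho_eq_count, P]
      ring
  have hN : N / d * d + N % d = N := Nat.div_add_mod' N d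
  have h1 := hq (N / d) (N % d)
  rw [hN] at h1
  have h2 : Nat.count P (N % d) ≤ N % d := Nat.count_le _
  have h3 : N % d < d := Nat.mod_lt _ (by omega)
  have hd0 : (0 : ℝ) < d := by positivity
  have h4 : (N : ℝ) = (N / d : ℕ) * d + (N % d : ℕ) := by exact_mod_cast hN.symm
  have h5 : (rho h d : ℝ) / d * N = (N / d : ℕ) * rho h d + (rho h d : ℝ) / d * (N % d : ℕ) := by
    rw [h4]; field_simp
  have h6 : (rho h d : ℝ) / d ≤ 1 := by
    rw [div_le_one hd0]; exact_mod_cast rho_le h d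
  have h7 : (rho h d : ℝ) / d * (N % d : ℕ) ≤ (N % d : ℕ) :=
    mul_le_of_le_one_left (by positivity) h6
  have h8 : 0 ≤ (rho h d : ℝ) / d * (N % d : ℕ) := by positivity
  have h2' : (Nat.count P (N % d) : ℝ) ≤ (N % d : ℕ) := by exact_mod_cast h2
  have h3' : ((N % d : ℕ) : ℝ) < d := by exact_mod_cast h3
  rw [h5, h1, abs_le]
  push_cast at *
  have : (0 : ℝ) ≤ Nat.count P (N % d) := by positivity
  constructor <;> linarith

/-- The sieve density `ν(d) = ρ(d) / d`. -/
noncomputable def nuH (h : ℕ) : ArithmeticFunction ℝ :=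
  ⟨fun d => (rho h d : ℝ) / d, by simp⟩

lemma nuH_apply (h d : ℕ) : nuH h d = (rho h d : ℝ) / d := rfl

lemma nuH_mult (h : ℕ) : (nuH h).IsMultiplicative := by
  rw [ArithmeticFunction.IsMultiplicative.iff_ne_zero]
  refine ⟨by simp [nuH_apply, rho_one], fun {m n} hm hn hmn => ?_⟩
  simp only [nuH_apply, rho_mul h hm hn hmn]
  push_cast
  field_simp
/-! ### Selberg's weights and the resulting upper bound -/

/-- The sum `S` of the Selberg terms `g(l)` over the divisors `l ≤ z` of the sifting product. -/
noncomputable def selS (s : BoundingSieve) (z : ℕ) : ℝ :=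
  ∑ l ∈ s.prodPrimes.divisors with l ≤ z, s.selbergTerms l

open scoped ArithmeticFunction.Moebius in
/-- Selberg's optimal weights `w(d) = μ(d) / (ν(d) S) * ∑ g(l)`, the sum being over the multiples
`l ≤ z` of `d` that divide the sifting product; they vanish for `d > z`
and for `d` not dividing that product. -/
noncomputable def selW (s : BoundingSieve) (z : ℕ) (d : ℕ) : ℝ :=
  if d ∣ s.prodPrimes then (μ d : ℝ) / (s.nu d * selS s z) *
    ∑ l ∈ s.prodPrimes.divisors with l ≤ z, (if d ∣ l then s.selbergTerms l else 0) else 0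

section
variable (s : BoundingSieve) {z : ℕ}

lemma selTerm_pos {l : ℕ} (hl : l ∈ s.prodPrimes.divisors.filter (· ≤ z)) :
    0 < s.selbergTerms l := by
  simp only [Finset.mem_filter, Nat.mem_divisors] at hl
  exact BoundingSieve.selbergTerms_pos hl.1.1

lemma selS_pos (hz : 1 ≤ z) : 0 < selS s z :=
  Finset.sum_pos (fun _ hl => selTerm_pos s hl)
    ⟨1, by simp [hz, BoundingSieve.prodPrimes_ne_zero]⟩

lemma selW_one (hz : 1 ≤ z) : selW s z 1 = 1 := by
  have := (selS_pos s hz).ne'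
  simp only [selW, one_dvd, if_true, s.nu_mult.map_one]
  rw [← selS]
  simp [this]

/-- Möbius inversion on the interval of divisors between `l` and `m`. -/
lemma sum_moebius_interval {l m : ℕ} (hm : Squarefree m) (P : ℕ) (hP : P ≠ 0) (hmP : m ∣ P) :
    ∑ d ∈ P.divisors, (if l ∣ d ∧ d ∣ m then (ArithmeticFunction.moebius d : ℝ) else 0) =
      if l = m then (ArithmeticFunction.moebius l : ℝ) else 0 := by
  by_cases hlm : l ∣ m
  · obtain ⟨k, rfl⟩ := hlm
    have hk0 : k ≠ 0 := by rintro rfl; simp at hm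
    have hl0 : l ≠ 0 := by rintro rfl; simp at hm
    have hco : l.Coprime k := Nat.coprime_of_squarefree_mul hm
    rw [← Finset.sum_filter]
    have e : {d ∈ P.divisors | l ∣ d ∧ d ∣ l * k} = k.divisors.image (l * ·) := by
      ext d
      simp only [Finset.mem_filter, Nat.mem_divisors, Finset.mem_image]
      constructor
      · rintro ⟨-, ⟨e, rfl⟩, h2⟩
        exact ⟨e, ⟨Nat.dvd_of_mul_dvd_mul_left (by omega) h2, hk0⟩, rfl⟩
      · rintro ⟨e, ⟨h1, -⟩, rfl⟩
        have := Nat.mul_dvd_mul_left l h1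
        exact ⟨⟨this.trans hmP, hP⟩, dvd_mul_right _ _, this⟩
    rw [e, Finset.sum_image (fun a _ b _ hab => Nat.eq_of_mul_eq_mul_left (by omega) hab)]
    have e2 : ∀ d ∈ k.divisors, (ArithmeticFunction.moebius (l * d) : ℝ) =
        ArithmeticFunction.moebius l * (ArithmeticFunction.moebius d : ℝ) := by
      intro d hd
      rw [ArithmeticFunction.isMultiplicative_moebius.map_mul_of_coprime
        (hco.coprime_dvd_right (Nat.dvd_of_mem_divisors hd))]
      push_cast; rfl
    rw [Finset.sum_congr rfl e2, ← Finset.mul_sum]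
    have e3 : ∑ d ∈ k.divisors, (ArithmeticFunction.moebius d : ℝ) = if k = 1 then 1 else 0 := by
      have := congrArg (fun f => f k) ArithmeticFunction.moebius_mul_coe_zeta
      simp only [ArithmeticFunction.coe_mul_zeta_apply,
        ArithmeticFunction.one_apply] at this
      exact_mod_cast this
    rw [e3]
    by_cases hk : k = 1
    · simp [hk]
    · have : l ≠ l * k := fun H => hk (by
        have : l * 1 = l * k := by omega
        exact (Nat.eq_of_mul_eq_mul_left (by omega) this).symm)
      simp [hk, this]
  · have : l ≠ m := by rintro rfl; exact hlm dvd_rfl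
    rw [if_neg this]
    exact Finset.sum_eq_zero fun d _ => if_neg fun H => hlm (H.1.trans H.2)

/-- In the coordinates that diagonalise the quadratic form, the weights are `μ(l) g(l) / S`,
truncated at `z`. -/
lemma selW_diag {l : ℕ} (hl : l ∣ s.prodPrimes) :
    ∑ d ∈ s.prodPrimes.divisors, (if l ∣ d then s.nu d * selW s z d else 0) =
      if l ≤ z then ArithmeticFunction.moebius l * s.selbergTerms l / selS s z else 0 := by
  have hP : s.prodPrimes ≠ 0 := BoundingSieve.prodPrimes_ne_zero
  calc _ = ∑ d ∈ s.prodPrimes.divisors, ∑ m ∈ s.prodPrimes.divisors with m ≤ z,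
        (if l ∣ d ∧ d ∣ m then (ArithmeticFunction.moebius d : ℝ) else 0) *
          (s.selbergTerms m / selS s z) := by
        refine Finset.sum_congr rfl fun d hd => ?_
        have hd' := Nat.dvd_of_mem_divisors hd
        have hnu : s.nu d ≠ 0 := BoundingSieve.nu_ne_zero hd'
        by_cases hld : l ∣ d
        · simp only [hld, if_true, selW, hd', true_and]
          rw [Finset.mul_sum, Finset.mul_sum]
          refine Finset.sum_congr rfl fun m _ => ?_
          split_ifs
          · by_cases hS : selS s z = 0
            · simp [hS]
            · field_simp
          · simp
        · simp [hld]
    _ = ∑ m ∈ s.prodPrimes.divisors with m ≤ z,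
        (if l = m then (ArithmeticFunction.moebius l : ℝ) else 0) *
          (s.selbergTerms m / selS s z) := by
        rw [Finset.sum_comm]
        refine Finset.sum_congr rfl fun m hm => ?_
        simp only [Finset.mem_filter] at hm
        have hm' := Nat.dvd_of_mem_divisors hm.1
        rw [← Finset.sum_mul, sum_moebius_interval
          (BoundingSieve.squarefree_of_dvd_prodPrimes hm') _ hP hm']
    _ = _ := by
        simp only [ite_mul, zero_mul]
        rw [Finset.sum_ite_eq]
        simp [hl, hP, mul_div_assoc]

/-- The main term equals `1 / S` for Selberg's weights. -/
lemma selW_mainSum (hz : 1 ≤ z) :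
    s.mainSum (BoundingSieve.lambdaSquared (selW s z)) = 1 / selS s z := by
  have hS := (selS_pos s hz).ne'
  rw [BoundingSieve.mainSum_lambdaSquared_eq_sum_mul_sum_sq]
  have : ∀ l ∈ s.prodPrimes.divisors, (s.selbergTerms l)⁻¹ *
      (∑ d ∈ s.prodPrimes.divisors, (if l ∣ d then s.nu d * selW s z d else 0)) ^ 2 =
      if l ≤ z then s.selbergTerms l / selS s z ^ 2 else 0 := by
    intro l hl
    have hl' := Nat.dvd_of_mem_divisors hl
    rw [selW_diag s hl']
    have hg := (BoundingSieve.selbergTerms_pos (s := s) hl').ne'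
    have hmu : (ArithmeticFunction.moebius l : ℝ) ^ 2 = 1 := by
      exact_mod_cast ArithmeticFunction.moebius_sq_eq_one_of_squarefree
        (BoundingSieve.squarefree_of_dvd_prodPrimes hl')
    split_ifs
    · rw [div_pow, mul_pow, hmu]; field_simp
    · simp
  rw [Finset.sum_congr rfl this, ← Finset.sum_filter, ← Finset.sum_div, ← selS]
  field_simp

lemma selW_zero {d : ℕ} (hd : z < d) : selW s z d = 0 := by
  unfold selW
  split_ifs with h
  · rw [Finset.sum_eq_zero, mul_zero]
    intro l hl
    simp only [Finset.mem_filter] at hl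
    refine if_neg fun H => ?_
    have := Nat.le_of_dvd (Nat.pos_of_mem_divisors hl.1) H
    omega
  · rfl

/-- A crude form of Selberg's bound `|w(d)| ≤ 1`: the sum over multiples of `d` is at most `S`, which
leaves `|w(d)| ≤ 1 / ν(d) ≤ d`. -/
lemma selW_abs (hz : 1 ≤ z) (hnu : ∀ d, d ∣ s.prodPrimes → 1 / (d : ℝ) ≤ s.nu d) (d : ℕ) :
    |selW s z d| ≤ z := by
  have hS := selS_pos s hz
  by_cases hdz : z < d
  · rw [selW_zero s hdz]; simp
  unfold selW
  split_ifs with h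
  · have hd0 : d ≠ 0 := ne_zero_of_dvd_ne_zero BoundingSieve.prodPrimes_ne_zero h
    have hn := BoundingSieve.nu_pos_of_dvd_prodPrimes h
    have h1 : 1 ≤ d * s.nu d := by
      have := hnu d h
      rwa [div_le_iff₀' (by positivity)] at this
    have hT0 : 0 ≤ ∑ l ∈ s.prodPrimes.divisors with l ≤ z,
        (if d ∣ l then s.selbergTerms l else 0) :=
      Finset.sum_nonneg fun l hl => by split_ifs; exacts [(selTerm_pos s hl).le, le_rfl]
    have hT1 : ∑ l ∈ s.prodPrimes.divisors with l ≤ z,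
        (if d ∣ l then s.selbergTerms l else 0) ≤ selS s z :=
      Finset.sum_le_sum fun l hl => by split_ifs; exacts [le_rfl, (selTerm_pos s hl).le]
    have hmu : |(ArithmeticFunction.moebius d : ℝ)| ≤ 1 := by
      exact_mod_cast ArithmeticFunction.abs_moebius_le_one (n := d)
    rw [abs_mul, abs_div, abs_of_pos (mul_pos hn hS), abs_of_nonneg hT0]
    calc _ ≤ 1 / (s.nu d * selS s z) * selS s z := by gcongr
      _ = 1 / s.nu d := by field_simp
      _ ≤ d := by rwa [div_le_iff₀ hn]
      _ ≤ z := by exact_mod_cast not_lt.1 hdz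
  · simp

/-- At most `z ^ 2` pairs `(a, b)` have `w a * w b ≠ 0`, and each of them has `lcm a b ≤ z ^ 2`. -/
lemma lambdaSq_abs (hz : 1 ≤ z) (hnu : ∀ d, d ∣ s.prodPrimes → 1 / (d : ℝ) ≤ s.nu d) (d : ℕ) :
    |BoundingSieve.lambdaSquared (selW s z) d| ≤ if d ≤ z ^ 2 then (z : ℝ) ^ 4 else 0 := by
  have hterm : ∀ a b : ℕ, a ∈ d.divisors → b ∈ d.divisors →
      |if d = Nat.lcm a b then selW s z a * selW s z b else 0| ≤
      if d ≤ z ^ 2 ∧ a ∈ Finset.Icc 1 z ∧ b ∈ Finset.Icc 1 z then (z : ℝ) ^ 2 else 0 := by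
    intro a b ha hb
    have ha0 := Nat.pos_of_mem_divisors ha
    have hb0 := Nat.pos_of_mem_divisors hb
    split_ifs with h1 h2 h2
    · rw [abs_mul, sq]
      gcongr <;> exact selW_abs s hz hnu _
    · by_cases haz : z < a
      · simp [selW_zero s haz]
      by_cases hbz : z < b
      · simp [selW_zero s hbz]
      exfalso
      apply h2
      simp only [Finset.mem_Icc]
      refine ⟨?_, ⟨ha0, by omega⟩, hb0, by omega⟩
      calc d ≤ a * b := h1 ▸ Nat.le_of_dvd (Nat.mul_pos ha0 hb0) (Nat.lcm_dvd_mul a b)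
        _ ≤ z * z := Nat.mul_le_mul (by omega) (by omega)
        _ = z ^ 2 := by ring
    · simp
    · simp
  unfold BoundingSieve.lambdaSquared
  calc _ ≤ ∑ a ∈ d.divisors, ∑ b ∈ d.divisors,
        (if d ≤ z ^ 2 ∧ a ∈ Finset.Icc 1 z ∧ b ∈ Finset.Icc 1 z then (z : ℝ) ^ 2 else 0) := by
        refine (Finset.abs_sum_le_sum_abs _ _).trans (Finset.sum_le_sum fun a ha => ?_)
        exact (Finset.abs_sum_le_sum_abs _ _).trans (Finset.sum_le_sum fun b hb => hterm a b ha hb)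
    _ ≤ _ := by
        split_ifs with hd
        · simp only [hd, true_and]
          rw [← Finset.sum_product', ← Finset.sum_filter, Finset.sum_const, nsmul_eq_mul]
          have hc : (Finset.filter (fun x : ℕ × ℕ => x.1 ∈ Finset.Icc 1 z ∧ x.2 ∈ Finset.Icc 1 z)
              (d.divisors ×ˢ d.divisors)).card ≤ z ^ 2 := by
            calc _ ≤ (Finset.Icc 1 z ×ˢ Finset.Icc 1 z).card :=
                  Finset.card_le_card fun x hx => by
                    simp only [Finset.mem_filter] at hx
                    exact Finset.mem_product.2 hx.2
              _ = z ^ 2 := by simp [sq]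
          calc _ ≤ ((z ^ 2 : ℕ) : ℝ) * (z : ℝ) ^ 2 := by gcongr
            _ = _ := by push_cast; ring
        · simp [hd]

/-- The Selberg upper bound for densities `ν(d) ≥ 1 / d` and remainders at most `d`. The error term
has at most `z ^ 2` moduli, each with weight at most `z ^ 4` and remainder at most `z ^ 2`. -/
theorem selberg_bound (hz : 1 ≤ z) (hnu : ∀ d, d ∣ s.prodPrimes → 1 / (d : ℝ) ≤ s.nu d)
    (hrem : ∀ d, d ∣ s.prodPrimes → |s.rem d| ≤ d) :
    s.siftedSum ≤ s.totalMass / selS s z + (z : ℝ) ^ 8 := by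
  have h := BoundingSieve.siftedSum_le_mainSum_errSum_of_upperMoebius (s := s) _
    (BoundingSieve.upperMoebius_lambdaSquared _ (selW_one s hz))
  rw [selW_mainSum s hz, mul_one_div] at h
  refine h.trans (add_le_add_right ?_ _)
  unfold BoundingSieve.errSum
  calc _ ≤ ∑ d ∈ s.prodPrimes.divisors,
        (if d ∈ Finset.Icc 1 (z ^ 2) then (z : ℝ) ^ 4 * (z : ℝ) ^ 2 else 0) := by
        refine Finset.sum_le_sum fun d hd => ?_
        have h1 := lambdaSq_abs s hz hnu d
        have h2 := hrem d (Nat.dvd_of_mem_divisors hd)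
        have h3 := Nat.pos_of_mem_divisors hd
        by_cases hdz : d ≤ z ^ 2
        · rw [if_pos hdz] at h1
          rw [if_pos (Finset.mem_Icc.2 ⟨h3, hdz⟩)]
          have : (d : ℝ) ≤ (z : ℝ) ^ 2 := by exact_mod_cast hdz
          gcongr
          exact h2.trans this
        · rw [if_neg hdz] at h1
          rw [if_neg (by simp [hdz])]
          have := abs_nonneg (BoundingSieve.lambdaSquared (selW s z) d)
          rw [le_antisymm h1 this, zero_mul]
    _ ≤ _ := by
        rw [← Finset.sum_filter, Finset.sum_const, nsmul_eq_mul]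
        have hc : (Finset.filter (fun d => d ∈ Finset.Icc 1 (z ^ 2)) s.prodPrimes.divisors).card
            ≤ z ^ 2 := by
          calc _ ≤ (Finset.Icc 1 (z ^ 2)).card :=
                Finset.card_le_card fun x hx => (Finset.mem_filter.1 hx).2
            _ = z ^ 2 := by simp
        calc _ ≤ ((z ^ 2 : ℕ) : ℝ) * ((z : ℝ) ^ 4 * (z : ℝ) ^ 2) := by gcongr
          _ = _ := by push_cast; ring
end

/-! ### A lower bound for sums of `τ(d) / d` -/

/-- The squarefree numbers in `[1, y]` that are coprime to `M`. -/
def sqfreeCoprime (M y : ℕ) : Finset ℕ :=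
  {a ∈ Finset.Icc 1 y | a.Coprime M ∧ Squarefree a}

lemma mem_sqfreeCoprime {M y a : ℕ} :
    a ∈ sqfreeCoprime M y ↔ (1 ≤ a ∧ a ≤ y) ∧ a.Coprime M ∧ Squarefree a := by
  simp [sqfreeCoprime]

lemma sum_inv_sq_le (y : ℕ) : ∑ t ∈ Finset.Icc 1 y, ((t : ℝ) ^ 2)⁻¹ ≤ 2 := by
  have := sum_Ioo_inv_sq_le (α := ℝ) 0 (y + 1)
  have e : Finset.Ioo 0 (y + 1) = Finset.Icc 1 y := by ext; simp; omega
  rw [e] at this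
  simpa using this

/-- Every `a` is `t ^ 2 * s` with `s` squarefree, and `∑ 1 / t ^ 2 ≤ 2`. -/
lemma sum_coprime_le (M y : ℕ) :
    ∑ a ∈ Finset.Icc 1 y with a.Coprime M, (a : ℝ)⁻¹ ≤
      2 * ∑ s ∈ sqfreeCoprime M y, (s : ℝ)⁻¹ := by
  have hsub : {a ∈ Finset.Icc 1 y | a.Coprime M} ⊆
      (Finset.Icc 1 y ×ˢ sqfreeCoprime M y).image (fun x => x.1 ^ 2 * x.2) := by
    intro a ha
    simp only [Finset.mem_filter, Finset.mem_Icc] at ha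
    obtain ⟨⟨h1, h2⟩, h3⟩ := ha
    obtain ⟨s, t, hs, ht, hst, hsq⟩ := Nat.sq_mul_squarefree_of_pos h1
    simp only [Finset.mem_image, Finset.mem_product, Prod.exists, mem_sqfreeCoprime,
      Finset.mem_Icc]
    have hsa : s ∣ a := Dvd.intro_left _ hst
    have hta : t ∣ a := (dvd_pow_self t two_ne_zero).trans (Dvd.intro _ hst)
    exact ⟨t, s, ⟨⟨ht, (Nat.le_of_dvd h1 hta).trans h2⟩, ⟨hs, (Nat.le_of_dvd h1 hsa).trans h2⟩,
      h3.coprime_dvd_left hsa, hsq⟩, hst⟩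
  calc _ ≤ ∑ a ∈ (Finset.Icc 1 y ×ˢ sqfreeCoprime M y).image (fun x : ℕ × ℕ => x.1 ^ 2 * x.2),
        ((a : ℕ) : ℝ)⁻¹ := Finset.sum_le_sum_of_subset_of_nonneg hsub fun _ _ _ => by positivity
    _ ≤ ∑ x ∈ Finset.Icc 1 y ×ˢ sqfreeCoprime M y, ((x.1 ^ 2 * x.2 : ℕ) : ℝ)⁻¹ :=
        Finset.sum_image_le_of_nonneg (f := fun a : ℕ => (a : ℝ)⁻¹) fun _ _ => by positivity
    _ = (∑ t ∈ Finset.Icc 1 y, ((t : ℝ) ^ 2)⁻¹) * ∑ s ∈ sqfreeCoprime M y, (s : ℝ)⁻¹ := by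
        rw [Finset.sum_mul_sum, Finset.sum_product]
        simp [mul_comm]
    _ ≤ _ := by
        gcongr
        exact sum_inv_sq_le y

/-- A pair `(a, b)` with gcd `g` is `(g * u, g * v)` with `u`, `v` coprime, so it is determined by `g`,
`d = u * v` and the divisor `u` of `d`, and `1 / (a * b) = 1 / (g ^ 2 * d)`. -/
lemma sq_sum_le (M y : ℕ) :
    (∑ s ∈ sqfreeCoprime M y, (s : ℝ)⁻¹) ^ 2 ≤
      2 * ∑ d ∈ sqfreeCoprime M (y ^ 2), (d.divisors.card : ℝ) / d := by
  set Q := sqfreeCoprime M y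
  -- `F` recovers `(a, b)` from the triple `(g, d, u)`.
  set E := Finset.Icc 1 y ×ˢ (sqfreeCoprime M (y ^ 2)).sigma (fun d => d.divisors)
  let F : (ℕ × (Σ _ : ℕ, ℕ)) → ℕ × ℕ := fun x => (x.1 * x.2.2, x.1 * (x.2.1 / x.2.2))
  have hsub : Q ×ˢ Q ⊆ E.image F := by
    rintro ⟨a, b⟩ hab
    simp only [Finset.mem_product, Q, mem_sqfreeCoprime] at hab
    obtain ⟨⟨⟨ha1, ha2⟩, ha3, ha4⟩, ⟨hb1, hb2⟩, hb3, hb4⟩ := hab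
    have hg : 0 < a.gcd b := Nat.gcd_pos_of_pos_left _ ha1
    obtain ⟨u, hu⟩ := Nat.gcd_dvd_left a b
    obtain ⟨v, hv⟩ := Nat.gcd_dvd_right a b
    have huv : u.Coprime v := by
      have := Nat.coprime_div_gcd_div_gcd (m := a) (n := b) hg
      rwa [Nat.div_eq_of_eq_mul_right hg hu, Nat.div_eq_of_eq_mul_right hg hv] at this
    have hua : u ∣ a := Dvd.intro_left _ hu.symm
    have hvb : v ∣ b := Dvd.intro_left _ hv.symm
    have hu0 : 0 < u := Nat.pos_of_dvd_of_pos hua ha1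
    have hv0 : 0 < v := Nat.pos_of_dvd_of_pos hvb hb1
    refine Finset.mem_image.2 ⟨⟨a.gcd b, ⟨u * v, u⟩⟩, ?_, ?_⟩
    · simp only [E, Finset.mem_product, Finset.mem_sigma, mem_sqfreeCoprime, Finset.mem_Icc,
        Nat.mem_divisors]
      refine ⟨⟨hg, (Nat.gcd_le_left b ha1).trans ha2⟩, ⟨⟨Nat.mul_pos hu0 hv0, ?_⟩, ?_, ?_⟩,
        dvd_mul_right _ _, (Nat.mul_pos hu0 hv0).ne'⟩
      · rw [sq]
        exact Nat.mul_le_mul ((Nat.le_of_dvd ha1 hua).trans ha2) ((Nat.le_of_dvd hb1 hvb).trans hb2)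
      · exact Nat.Coprime.mul_left (ha3.coprime_dvd_left hua) (hb3.coprime_dvd_left hvb)
      · exact (Nat.squarefree_mul huv).2
          ⟨ha4.squarefree_of_dvd hua, hb4.squarefree_of_dvd hvb⟩
    · simp only [F, Nat.mul_div_cancel_left v hu0]
      rw [← hu, ← hv]
  calc _ = ∑ x ∈ Q ×ˢ Q, (x.1 : ℝ)⁻¹ * (x.2 : ℝ)⁻¹ := by
        rw [sq, Finset.sum_mul_sum, Finset.sum_product]
    _ ≤ ∑ x ∈ E.image F, (x.1 : ℝ)⁻¹ * (x.2 : ℝ)⁻¹ :=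
        Finset.sum_le_sum_of_subset_of_nonneg hsub fun _ _ _ => by positivity
    _ ≤ ∑ x ∈ E, ((F x).1 : ℝ)⁻¹ * ((F x).2 : ℝ)⁻¹ :=
        Finset.sum_image_le_of_nonneg (f := fun x : ℕ × ℕ => (x.1 : ℝ)⁻¹ * (x.2 : ℝ)⁻¹)
          fun _ _ => by positivity
    _ = ∑ x ∈ E, ((x.1 : ℝ) ^ 2)⁻¹ * (x.2.1 : ℝ)⁻¹ := by
        refine Finset.sum_congr rfl fun x hx => ?_
        simp only [E, Finset.mem_product, Finset.mem_sigma, Nat.mem_divisors] at hx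
        have h0 : (x.2.2 : ℝ) ≠ 0 := by
          exact_mod_cast ne_zero_of_dvd_ne_zero hx.2.2.2 hx.2.2.1
        simp only [F]
        rw [Nat.cast_mul, Nat.cast_mul, Nat.cast_div hx.2.2.1 h0, ← mul_inv, ← mul_inv]
        congr 1
        field_simp
    _ = (∑ t ∈ Finset.Icc 1 y, ((t : ℝ) ^ 2)⁻¹) *
          ∑ d ∈ sqfreeCoprime M (y ^ 2), (d.divisors.card : ℝ) / d := by
        rw [Finset.sum_product, Finset.sum_mul]
        refine Finset.sum_congr rfl fun t _ => ?_
        dsimp only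
        rw [← Finset.mul_sum, Finset.sum_sigma]
        congr 1
        refine Finset.sum_congr rfl fun d _ => ?_
        simp [div_eq_mul_inv]
    _ ≤ _ := by
        gcongr
        exact sum_inv_sq_le y

/-- Only the terms `a = 1 + M * k ≤ M * (k + 1)` are kept. -/
lemma log_le_sum_coprime {M : ℕ} (hM : 1 ≤ M) (K : ℕ) :
    Real.log (K + 1) / M ≤ ∑ a ∈ Finset.Icc 1 (M * K) with a.Coprime M, (a : ℝ)⁻¹ := by
  have h1 := log_add_one_le_harmonic K
  have hM0 : (0 : ℝ) < M := by exact_mod_cast hM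
  calc Real.log (K + 1) / M ≤ (harmonic K : ℝ) / M := by
        gcongr; exact_mod_cast h1
    _ = ∑ k ∈ Finset.range K, ((M : ℝ) * (k + 1))⁻¹ := by
        rw [harmonic, Rat.cast_sum, Finset.sum_div]
        refine Finset.sum_congr rfl fun k _ => ?_
        push_cast
        field_simp
    _ ≤ ∑ k ∈ Finset.range K, ((1 + M * k : ℕ) : ℝ)⁻¹ := by
        refine Finset.sum_le_sum fun k _ => ?_
        have : (1 : ℝ) ≤ M := by exact_mod_cast hM
        apply inv_anti₀ (by positivity)
        push_cast; nlinarith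
    _ = ∑ a ∈ (Finset.range K).image (fun k => 1 + M * k), (a : ℝ)⁻¹ := by
        rw [Finset.sum_image]
        intro a _ b _ hab
        exact Nat.eq_of_mul_eq_mul_left hM (by simpa using hab)
    _ ≤ _ := by
        refine Finset.sum_le_sum_of_subset_of_nonneg ?_ fun _ _ _ => by positivity
        intro a ha
        simp only [Finset.mem_image, Finset.mem_range] at ha
        obtain ⟨k, hk, rfl⟩ := ha
        simp only [Finset.mem_filter, Finset.mem_Icc]
        refine ⟨⟨by omega, ?_⟩, by simp⟩
        have : M * (k + 1) ≤ M * K := Nat.mul_le_mul_left _ hk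
        rw [mul_add] at this; omega

lemma log_sq_le {M : ℕ} (hM : 1 ≤ M) (K : ℕ) :
    Real.log (K + 1) ^ 2 / (8 * M ^ 2) ≤
      ∑ d ∈ sqfreeCoprime M ((M * K) ^ 2), (d.divisors.card : ℝ) / d := by
  have h1 := (log_le_sum_coprime hM K).trans (sum_coprime_le M (M * K))
  have h2 := sq_sum_le M (M * K)
  have h0 : 0 ≤ Real.log (K + 1) / M :=
    div_nonneg (Real.log_nonneg (by simp)) (by positivity)
  have h3 := pow_le_pow_left₀ h0 h1 2
  rw [mul_pow, div_pow] at h3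
  have : Real.log (K + 1) ^ 2 / (8 * M ^ 2) = Real.log (K + 1) ^ 2 / M ^ 2 / 8 := by
    rw [div_div]; ring
  linarith

/-! ### The sieve for prime pairs -/

/-- The product of the primes `p ≤ z` not dividing `2 * h`. Leaving out `2` and the divisors of `h`
ensures that each sifting prime has density exactly `2 / p < 1`. -/
def sievePrimes (h z : ℕ) : ℕ := ∏ p ∈ Finset.Icc 1 z with p.Prime ∧ ¬ p ∣ 2 * h, p

lemma sievePrimes_squarefree (h z : ℕ) : Squarefree (sievePrimes h z) := by
  refine Finset.squarefree_prod_of_pairwise_isCoprime (fun p hp q hq hpq => ?_) fun p hp => ?_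
  · rw [Finset.mem_coe, Finset.mem_filter] at hp hq
    exact Nat.coprime_iff_isRelPrime.1 ((Nat.coprime_primes hp.2.1 hq.2.1).2 hpq)
  · exact (Finset.mem_filter.1 hp).2.1.squarefree

lemma prime_dvd_sievePrimes {h z p : ℕ} (hp : p.Prime) (hd : p ∣ sievePrimes h z) :
    p ≤ z ∧ ¬ p ∣ 2 * h := by
  obtain ⟨q, hq, hpq⟩ := (hp.prime.dvd_finsetProd_iff _).1 hd
  simp only [Finset.mem_filter, Finset.mem_Icc] at hq
  obtain rfl := (Nat.prime_dvd_prime_iff_eq hp hq.2.1).1 hpq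
  exact ⟨hq.1.2, hq.2.2⟩

lemma dvd_sievePrimes {h z d : ℕ} (hd : d ∈ sqfreeCoprime (2 * h) z) :
    d ∣ sievePrimes h z := by
  obtain ⟨⟨h1, h2⟩, h3, h4⟩ := mem_sqfreeCoprime.1 hd
  rw [← Nat.prod_primeFactors_of_squarefree h4]
  refine Finset.prod_dvd_prod_of_subset _ _ _ fun p hp => ?_
  have hpp := Nat.prime_of_mem_primeFactors hp
  have hpd := Nat.dvd_of_mem_primeFactors hp
  simp only [Finset.mem_filter, Finset.mem_Icc]
  refine ⟨⟨hpp.one_le, (Nat.le_of_dvd h1 hpd).trans h2⟩, hpp, fun H => ?_⟩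
  exact hpp.one_lt.ne' (Nat.dvd_one.1 (h3 ▸ Nat.dvd_gcd hpd H))

lemma nuH_prime {h z p : ℕ} (hp : p.Prime) (hd : p ∣ sievePrimes h z) :
    nuH h p = 2 / p ∧ 2 < p := by
  have h1 := (prime_dvd_sievePrimes hp hd).2
  rw [hp.dvd_mul, not_or] at h1
  refine ⟨by rw [nuH_apply, rho_prime hp h1.2]; rfl, ?_⟩
  refine lt_of_le_of_ne hp.two_le fun H => h1.1 (by rw [← H])

/-- The sieve problem for the values `n * (n + h)` with `0 ≤ n ≤ N`. Including `n = 0` makes the total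
mass `N + 1` and turns the sums over multiples into `Nat.count`. -/
noncomputable def twinSieve (h z N : ℕ) : BoundingSieve where
  support := (Finset.range (N + 1)).image (fun n => n * (n + h))
  prodPrimes := sievePrimes h z
  prodPrimes_squarefree := sievePrimes_squarefree h z
  weights := fun _ => 1
  weights_nonneg := fun _ => zero_le_one
  totalMass := N + 1
  nu := nuH h
  nu_mult := nuH_mult h
  nu_pos_of_prime := fun p hp hd => by
    have := hp.pos
    rw [(nuH_prime hp hd).1]; positivity
  nu_lt_one_of_prime := fun p hp hd => by
    obtain ⟨h1, h2⟩ := nuH_prime hp hd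
    rw [h1, div_lt_one (by exact_mod_cast hp.pos)]
    exact_mod_cast h2

lemma mul_add_injective (h : ℕ) : Function.Injective (fun n : ℕ => n * (n + h)) := by
  refine StrictMono.injective fun a b hab => ?_
  exact Nat.mul_lt_mul'' hab (by omega)

lemma twinSieve_multSum (h z N : ℕ) (d : ℕ) :
    (twinSieve h z N).multSum d = Nat.count (fun r => d ∣ r * (r + h)) (N + 1) := by
  rw [Nat.count_eq_card_filter_range]
  simp only [BoundingSieve.multSum, twinSieve]
  rw [Finset.sum_image fun a _ b _ hab => mul_add_injective h hab, ← Finset.sum_filter]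
  simp

lemma twinSieve_rem (h z N : ℕ) (d : ℕ) (hd : d ≠ 0) :
    |(twinSieve h z N).rem d| ≤ d := by
  have := count_bound h (N + 1) hd
  rw [BoundingSieve.rem, twinSieve_multSum h z N]
  push_cast at this
  exact this

/-- A prime pair `(p, p + h)` with `p > z` survives the sieve. -/
lemma twinSieve_siftedSum (h z N : ℕ) :
    (((Finset.Icc 1 N).filter (fun p => Nat.Prime p ∧ Nat.Prime (p + h))).card : ℝ) ≤
      z + (twinSieve h z N).siftedSum := by
  have e : (twinSieve h z N).siftedSum =
      ((Finset.range (N + 1)).filter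
        (fun n => Nat.Coprime (sievePrimes h z) (n * (n + h)))).card := by
    have e1 : (twinSieve h z N).siftedSum =
        ∑ n ∈ (Finset.range (N + 1)).image (fun n => n * (n + h)),
          if Nat.Coprime (sievePrimes h z) n then (1 : ℝ) else 0 := rfl
    rw [e1, Finset.sum_image fun a _ b _ hab => mul_add_injective h hab, Finset.sum_boole]
  rw [e]
  have hsub : (Finset.Icc 1 N).filter (fun p => Nat.Prime p ∧ Nat.Prime (p + h)) ⊆
      Finset.Icc 1 z ∪ (Finset.range (N + 1)).filter
        (fun n => Nat.Coprime (sievePrimes h z) (n * (n + h))) := by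
    intro p hp
    simp only [Finset.mem_filter, Finset.mem_Icc, Finset.mem_union, Finset.mem_range] at hp ⊢
    by_cases hpz : p ≤ z
    · exact Or.inl ⟨hp.1.1, hpz⟩
    · refine Or.inr ⟨by omega, Nat.Coprime.mul_right ?_ ?_⟩
      · refine ((hp.2.1.coprime_iff_not_dvd).2 fun H => ?_).symm
        exact hpz (prime_dvd_sievePrimes hp.2.1 H).1
      · refine ((hp.2.2.coprime_iff_not_dvd).2 fun H => ?_).symm
        have := (prime_dvd_sievePrimes hp.2.2 H).1
        omega
  have := (Finset.card_le_card hsub).trans (Finset.card_union_le _ _)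
  rw [Nat.card_Icc, Nat.add_sub_cancel] at this
  exact_mod_cast this

/-- For squarefree `d` composed of sifting primes, `τ(d) / d = ν(d) ≤ g(d)`. -/
lemma card_divisors_div_le (h z N : ℕ) {d : ℕ} (hd : d ∣ sievePrimes h z) :
    (d.divisors.card : ℝ) / d ≤ (twinSieve h z N).selbergTerms d := by
  have hsq : Squarefree d := (sievePrimes_squarefree h z).squarefree_of_dvd hd
  have hd' : d ∣ (twinSieve h z N).prodPrimes := hd
  have h1 : (d.divisors.card : ℝ) / d ≤ (twinSieve h z N).nu d := by
    rw [← BoundingSieve.prod_primeFactors_nu hd']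
    have e : ∏ p ∈ d.primeFactors, (twinSieve h z N).nu p =
        (∏ p ∈ d.primeFactors, (2 : ℝ)) / d := by
      have ed : (d : ℝ) = ∏ p ∈ d.primeFactors, (p : ℝ) := by
        rw [← Nat.cast_prod, Nat.prod_primeFactors_of_squarefree hsq]
      rw [ed, ← Finset.prod_div_distrib]
      exact Finset.prod_congr rfl fun p hp => (nuH_prime (Nat.prime_of_mem_primeFactors hp)
        ((Nat.dvd_of_mem_primeFactors hp).trans hd)).1
    rw [e, Nat.card_divisors hsq.ne_zero]
    gcongr
    push_cast
    refine Finset.prod_le_prod (fun _ _ => by positivity) fun p _ => ?_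
    have := hsq.natFactorization_le_one p
    have : (d.factorization p : ℝ) ≤ 1 := by exact_mod_cast this
    linarith
  refine h1.trans ?_
  rw [BoundingSieve.selbergTerms_apply]
  refine le_mul_of_one_le_right (BoundingSieve.nu_pos_of_dvd_prodPrimes hd').le ?_
  refine Finset.one_le_prod fun p hp => ?_
  have hpp := Nat.prime_of_mem_primeFactors hp
  have hpd := (Nat.dvd_of_mem_primeFactors hp).trans hd'
  have a := (twinSieve h z N).nu_pos_of_prime p hpp hpd
  have b := (twinSieve h z N).nu_lt_one_of_prime p hpp hpd
  exact (one_le_inv₀ (by linarith)).2 (by linarith)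

lemma log_sq_le_selS (h K N : ℕ) (hh : 1 ≤ h) :
    Real.log (K + 1) ^ 2 / (8 * ((2 * h : ℕ) : ℝ) ^ 2) ≤
      selS (twinSieve h ((2 * h * K) ^ 2) N) ((2 * h * K) ^ 2) := by
  refine (log_sq_le (by omega) K).trans ?_
  set z := (2 * h * K) ^ 2
  unfold selS
  calc _ ≤ ∑ d ∈ sqfreeCoprime (2 * h) z, (twinSieve h z N).selbergTerms d :=
        Finset.sum_le_sum fun d hd => card_divisors_div_le h z N (dvd_sievePrimes hd)
    _ ≤ _ := by
        refine Finset.sum_le_sum_of_subset_of_nonneg (fun d hd => ?_)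
          fun d hd _ => (selTerm_pos _ hd).le
        simp only [Finset.mem_filter, Nat.mem_divisors]
        exact ⟨⟨dvd_sievePrimes hd, (sievePrimes_squarefree h z).ne_zero⟩,
          (mem_sqfreeCoprime.1 hd).1.2⟩

/-- The sieve bound at level `z = (2 * h * K) ^ 2`; the pairs with `p ≤ z` and the error term each
contribute at most `z ^ 8 = (2 * h * K) ^ 16`. -/
lemma twin_count_le (h K N : ℕ) (hh : 1 ≤ h) (hK : 1 ≤ K) :
    (((Finset.Icc 1 N).filter (fun p => Nat.Prime p ∧ Nat.Prime (p + h))).card : ℝ) ≤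
      2 * ((2 * h : ℕ) : ℝ) ^ 16 * K ^ 16 +
        (N + 1) * (8 * ((2 * h : ℕ) : ℝ) ^ 2) / Real.log (K + 1) ^ 2 := by
  set z := (2 * h * K) ^ 2 with hz
  have hz1 : 1 ≤ z := Nat.one_le_pow _ _ (by positivity)
  have h1 := twinSieve_siftedSum h z N
  have h2 := selberg_bound (twinSieve h z N) hz1
    (fun d hd => by
      have hd0 : d ≠ 0 := ne_zero_of_dvd_ne_zero BoundingSieve.prodPrimes_ne_zero hd
      change _ ≤ nuH h d
      rw [nuH_apply]
      have : (1 : ℝ) ≤ rho h d := by exact_mod_cast rho_pos h hd0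
      gcongr)
    (fun d hd => twinSieve_rem h z N d
      (ne_zero_of_dvd_ne_zero BoundingSieve.prodPrimes_ne_zero hd))
  have h3 := log_sq_le_selS h K N hh
  rw [← hz] at h3
  have hlog : 0 < Real.log (K + 1) := Real.log_pos (by
    have : (1 : ℝ) ≤ K := by exact_mod_cast hK
    linarith)
  have hM : (0 : ℝ) < ((2 * h : ℕ) : ℝ) := by exact_mod_cast (by omega : 0 < 2 * h)
  have h4 : (twinSieve h z N).totalMass / selS (twinSieve h z N) z ≤
      (N + 1) * (8 * ((2 * h : ℕ) : ℝ) ^ 2) / Real.log (K + 1) ^ 2 := by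
    change ((N : ℝ) + 1) / _ ≤ _
    calc _ ≤ ((N : ℝ) + 1) / (Real.log (K + 1) ^ 2 / (8 * ((2 * h : ℕ) : ℝ) ^ 2)) := by
          gcongr
      _ = _ := by field_simp
  have h5 : (z : ℝ) ^ 8 = ((2 * h : ℕ) : ℝ) ^ 16 * K ^ 16 := by
    rw [hz]; push_cast; ring
  have h6 : (z : ℝ) ≤ (z : ℝ) ^ 8 :=
    le_self_pow₀ (by exact_mod_cast hz1) (by norm_num)
  linarith

theorem stmt_6 (h : ℕ) (hh : 2 ≤ h) :
    ∃ C : ℝ, ∀ x : ℝ, 2 ≤ x →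
      (((Finset.Icc 1 ⌊x⌋₊).filter (fun p => Nat.Prime p ∧ Nat.Prime (p + h))).card : ℝ) ≤
        C * x / (Real.log x) ^ 2 := by
  refine ⟨32 * ((2 * h : ℕ) : ℝ) ^ 16 + 16384 * ((2 * h : ℕ) : ℝ) ^ 2, fun x hx => ?_⟩
  set M : ℝ := ((2 * h : ℕ) : ℝ)
  have hM0 : 0 ≤ M := Nat.cast_nonneg _
  have hx0 : 0 < x := by linarith
  set t : ℝ := x ^ (1 / 32 : ℝ) with ht
  have ht1 : 1 ≤ t := Real.one_le_rpow (by linarith) (by norm_num)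
  set K := ⌊t⌋₊
  have hK1 : 1 ≤ K := (Nat.one_le_floor_iff _).2 ht1
  have hKt : (K : ℝ) ≤ t := Nat.floor_le (by linarith)
  have htK : t < K + 1 := Nat.lt_floor_add_one t
  have hL0 : 0 < Real.log x := Real.log_pos (by linarith)
  have hlog : Real.log x / 32 ≤ Real.log (K + 1) := by
    have : Real.log t = Real.log x / 32 := by rw [ht, Real.log_rpow hx0]; ring
    rw [← this]
    exact Real.log_le_log (by linarith) htK.le
  have hmain := twin_count_le h K ⌊x⌋₊ (by omega) hK1
  have hN : (⌊x⌋₊ : ℝ) + 1 ≤ 2 * x := by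
    have := Nat.floor_le hx0.le
    linarith
  -- Since `K ^ 16 ≤ √x` and `log x ≤ 4 * x ^ (1 / 4)`, the error term is absorbed in `x / (log x) ^ 2`.
  have hK16 : (K : ℝ) ^ 16 ≤ x ^ (1 / 2 : ℝ) := by
    calc (K : ℝ) ^ 16 ≤ t ^ 16 := by gcongr
      _ = x ^ (1 / 2 : ℝ) := by
        rw [ht, ← Real.rpow_natCast, ← Real.rpow_mul hx0.le]; norm_num
  have hLsq : Real.log x ^ 2 ≤ 16 * x ^ (1 / 2 : ℝ) := by
    have h1 := Real.log_le_rpow_div hx0.le (show (0 : ℝ) < 1 / 4 by norm_num)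
    calc Real.log x ^ 2 ≤ (x ^ (1 / 4 : ℝ) / (1 / 4)) ^ 2 := by gcongr
      _ = 16 * (x ^ (1 / 4 : ℝ)) ^ 2 := by ring
      _ = _ := by rw [← Real.rpow_natCast, ← Real.rpow_mul hx0.le]; norm_num
  have hhalf : x ^ (1 / 2 : ℝ) * x ^ (1 / 2 : ℝ) = x := by
    rw [← Real.rpow_add hx0]; norm_num
  have hA : (K : ℝ) ^ 16 ≤ 16 * x / Real.log x ^ 2 := by
    rw [le_div_iff₀ (by positivity)]
    calc _ ≤ x ^ (1 / 2 : ℝ) * (16 * x ^ (1 / 2 : ℝ)) := by gcongr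
      _ = 16 * (x ^ (1 / 2 : ℝ) * x ^ (1 / 2 : ℝ)) := by ring
      _ = _ := by rw [hhalf]
  have hB : ((⌊x⌋₊ : ℝ) + 1) * (8 * M ^ 2) / Real.log (K + 1) ^ 2 ≤
      16384 * M ^ 2 * x / Real.log x ^ 2 := by
    calc _ ≤ 2 * x * (8 * M ^ 2) / (Real.log x / 32) ^ 2 := by gcongr
      _ = _ := by field_simp; ring
  calc _ ≤ _ := hmain
    _ ≤ 2 * M ^ 16 * (16 * x / Real.log x ^ 2) + 16384 * M ^ 2 * x / Real.log x ^ 2 := by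
        gcongr
    _ = _ := by ring
end

section
/- Let S ⊆ ℤ⁺ satisfy |S ∩ [1,x]| / (x / log x) → ∞ as x → ∞. Then for every positive integer n, the set A_n = {π(kn) : k ∈ ℤ⁺} contains infinitely many elements of S. -/
/-!
An integer `a ≥ 1` fails to be of the form `π(k n)` only if the interval between the `a`-th prime
`p` and the next prime `q` contains no multiple of `n`, which forces `q - p < n`. Prime pairs with
a given difference `h` are rare: Selberg's sieve bounds the number of them below `N` by
`O_h(N / log² N)`. Summing over `h < n` and taking `N` to be about the `X`-th prime, so that
`N / log N = O(X)` by Chebyshev's lower bound, at most `O_n(X / log X)` integers up to `X` are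
missing from `{π(k n) : k ≥ 1}` (`card_missing_le`). A set `S` whose counting function is not
`O(x / log x)` therefore meets `{π(k n) : k ≥ 1}` infinitely often.

The sieve bound (`card_prime_pairs_le`) sifts the values `m (m + h)` by the primes `p ≤ R` not
dividing `2 h`. Mathlib provides the diagonalisation of the main term of a `Λ²` sieve; Selberg's
weights turn that main term into `N / S`, where `S = ∑_{l ≤ R} g(l)` over squarefree `l` coprime to
`2 h`, and `g(p) = 2 / (p - 2)` (`mainSum_selberg`). Since `R` is taken to be a small power of `N`,
the crude error bound `R ^ 6` (`errSum_selberg`) suffices. What remains is `S ≫ log² R`: because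
`g(p) ≥ 2 / p + 1 / p²`, the sum `S` dominates the square of `∑ 1 / m` over squarefree `m ≤ √R`
coprime to `2 h` (`sqfreeSum_sq_le`), and the latter sum is `≫ log R` (`log_le_sqfreeSum`).
-/

open scoped ArithmeticFunction.Moebius
open BoundingSieve

/-! ### Counting solutions of `l ∣ m (m + h)` -/

/-- The congruence `x (x + h) ≡ 0` has two roots modulo each prime not dividing `h`, hence
`2 ^ ω(l)` roots modulo a squarefree `l` coprime to `h`, by the Chinese remainder theorem. -/
theorem card_zmod_roots (h : ℕ) (l : ℕ) :
    Squarefree l → l.Coprime h →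
    Nat.card {x : ZMod l // x * (x + (h : ZMod l)) = 0} = ∏ _p ∈ l.primeFactors, 2 := by
  induction l using Nat.recOnPosPrimePosCoprime with
  | zero => intro h0; exact absurd h0 not_squarefree_zero
  | one =>
    intro _ _
    have : Subsingleton {x : ZMod 1 // x * (x + (h : ZMod 1)) = 0} := inferInstance
    have : Nonempty {x : ZMod 1 // x * (x + (h : ZMod 1)) = 0} := ⟨⟨0, by simp⟩⟩
    rw [Nat.card_unique]
    simp
  | prime_pow p n hp hn =>
    intro hsq hco
    have hn1 : n = 1 := by
      have := (Nat.squarefree_pow_iff hp.ne_one hn.ne').1 hsq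
      exact this.2
    subst hn1
    rw [pow_one] at *
    have : Fact p.Prime := ⟨hp⟩
    have hne : (h : ZMod p) ≠ 0 := by
      rw [Ne, ZMod.natCast_eq_zero_iff]
      exact fun hd => (Nat.Prime.coprime_iff_not_dvd hp).1 hco hd
    have : {x : ZMod p | x * (x + (h : ZMod p)) = 0} = {0, -(h : ZMod p)} := by
      ext x
      simp [eq_neg_iff_add_eq_zero]
    have h2 := congrArg Set.ncard this
    rw [Set.ncard_pair (by simpa [eq_comm] using hne)] at h2
    rw [hp.primeFactors]
    rw [Finset.prod_singleton, ← h2]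
    exact Nat.card_coe_set_eq _
  | coprime a b ha hb hab iha ihb =>
    intro hsq hco
    have hsa := Squarefree.of_mul_left hsq
    have hsb := Squarefree.of_mul_right hsq
    have ea := iha hsa (Nat.Coprime.coprime_mul_right hco)
    have eb := ihb hsb (Nat.Coprime.coprime_mul_left hco)
    rw [Nat.Coprime.primeFactors_mul hab,
      Finset.prod_union hab.disjoint_primeFactors, ← ea, ← eb, ← Nat.card_prod]
    apply Nat.card_congr
    let e := ZMod.chineseRemainder hab
    refine (Equiv.subtypeEquiv (q := fun y : ZMod a × ZMod b => y * (y + (h : ZMod a × ZMod b)) = 0)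
      e.toEquiv ?_).trans ?_
    · intro x
      have : e (x * (x + (h : ZMod (a*b)))) = e x * (e x + (h : ZMod a × ZMod b)) := by simp
      constructor
      · intro hx
        rw [hx, map_zero] at this
        exact this.symm
      · intro hx
        apply e.injective
        rw [this, map_zero]
        exact hx
    · exact {
        toFun := fun y => (⟨y.1.1, by simpa using congrArg Prod.fst y.2⟩,
          ⟨y.1.2, by simpa using congrArg Prod.snd y.2⟩)
        invFun := fun y => ⟨(y.1.1, y.2.1), by
          ext
          · simpa using y.1.2
          · simpa using y.2.2⟩
        left_inv := fun y => rfl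
        right_inv := fun y => rfl }

theorem count_roots (h l : ℕ) (hsq : Squarefree l) (hco : l.Coprime h) :
    Nat.count (fun m => l ∣ m * (m + h)) l = ∏ _p ∈ l.primeFactors, 2 := by
  have hl : l ≠ 0 := hsq.ne_zero
  have : NeZero l := ⟨hl⟩
  rw [← card_zmod_roots h l hsq hco, Nat.count_eq_card_filter_range, ← Nat.card_eq_finsetCard]
  apply Nat.card_congr
  have key : ∀ m : ℕ, (l ∣ m * (m + h)) ↔ (m : ZMod l) * ((m : ZMod l) + (h : ZMod l)) = 0 := by
    intro m
    rw [← ZMod.natCast_eq_zero_iff]; push_cast; rfl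
  exact {
    toFun := fun m => ⟨(m.1 : ZMod l), (key _).1 (Finset.mem_filter.1 m.2).2⟩
    invFun := fun x => ⟨x.1.val, by
      rw [Finset.mem_filter, Finset.mem_range, key]
      refine ⟨ZMod.val_lt _, ?_⟩
      simpa using x.2⟩
    left_inv := fun m => by
      ext
      simp only
      exact ZMod.val_cast_of_lt (Finset.mem_range.1 (Finset.mem_filter.1 m.2).1)
    right_inv := fun x => by ext; simp }

theorem count_periodic (p : ℕ → Prop) [DecidablePred p] (l : ℕ) (hp : ∀ m, p (l + m) ↔ p m)
    (q r : ℕ) : Nat.count p (q * l + r) = q * Nat.count p l + Nat.count p r := by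
  induction q with
  | zero => simp
  | succ q ih =>
    have : (q + 1) * l + r = l + (q * l + r) := by ring
    rw [this, Nat.count_add]
    have h2 : Nat.count (fun k => p (l + k)) (q * l + r) = Nat.count p (q * l + r) := by
      congr 1
      · funext k; exact propext (hp k)
    rw [h2, ih]; ring

/-- The number of `m < N` with `l ∣ m (m + h)` is `N ∏_{p ∣ l} 2 / p` up to an error at most `l`:
only the incomplete last block of residues contributes to the error. -/
theorem abs_count_sub_le (h l N : ℕ) (hsq : Squarefree l) (hco : l.Coprime h) :
    |(Nat.count (fun m => l ∣ m * (m + h)) N : ℝ) - (∏ p ∈ l.primeFactors, (2 / p : ℝ)) * N|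
      ≤ l := by
  have hl : 0 < l := hsq.ne_zero.bot_lt
  set p : ℕ → Prop := fun m => l ∣ m * (m + h) with hp
  have hper : ∀ m, p (l + m) ↔ p m := by
    intro m
    simp only [hp]
    have : (l + m) * (l + m + h) = l * (l + m + h + m) + m * (m + h) := by ring
    rw [this]
    exact (Nat.dvd_add_iff_right (Dvd.intro _ rfl)).symm
  have hc := count_periodic p l hper (N / l) (N % l)
  rw [Nat.div_add_mod'] at hc
  have hρ := count_roots h l hsq hco
  have hρl : Nat.count p l ≤ l := Nat.count_le _
  have hr : Nat.count p (N % l) ≤ Nat.count p l := Nat.count_monotone _ (Nat.mod_lt _ hl).le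
  have hnu : (∏ p ∈ l.primeFactors, (2 / p : ℝ)) = (Nat.count p l : ℝ) / l := by
    rw [Finset.prod_div_distrib, hρ]
    push_cast
    congr 1
    rw [← Nat.cast_prod, Nat.prod_primeFactors_of_squarefree hsq]
  rw [hnu, hc]
  have hN : (N : ℝ) = (N / l : ℕ) * l + (N % l : ℕ) := by
    exact_mod_cast (Nat.div_add_mod' N l).symm
  have hl' : (0 : ℝ) < l := by exact_mod_cast hl
  have e : ((N / l * Nat.count p l + Nat.count p (N % l) : ℕ) : ℝ) - (Nat.count p l : ℝ) / l * N
     = Nat.count p (N % l) - Nat.count p l * ((N % l : ℕ) / l) := by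
    conv_lhs => rw [hN]
    push_cast
    field_simp
    ring
  rw [e]
  have h1 : ((N % l : ℕ) : ℝ) / l ≤ 1 := by
    rw [div_le_one hl']; exact_mod_cast (Nat.mod_lt _ hl).le
  have h0 : 0 ≤ ((N % l : ℕ) : ℝ) / l := by positivity
  have h3 : (Nat.count p l : ℝ) ≤ l := by exact_mod_cast hρl
  have h4 : (Nat.count p (N % l) : ℝ) ≤ Nat.count p l := by exact_mod_cast hr
  have h5 : (0 : ℝ) ≤ Nat.count p (N % l) := by positivity
  have h6 : (0 : ℝ) ≤ Nat.count p l := by positivity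
  rw [abs_le]
  constructor <;> nlinarith

/-! ### Selberg's weights -/

theorem sum_moebius_between {l m : ℕ} (hm : Squarefree m) (hl : l ∣ m) :
    ∑ d ∈ m.divisors with l ∣ d, (μ d : ℝ) = if m = l then (μ l : ℝ) else 0 := by
  obtain ⟨k, rfl⟩ := hl
  have hl0 : l ≠ 0 := left_ne_zero_of_mul hm.ne_zero
  have hk0 : k ≠ 0 := right_ne_zero_of_mul hm.ne_zero
  have hlk : l.Coprime k := Nat.coprime_of_squarefree_mul hm
  have himg : (l * k).divisors.filter (l ∣ ·) = k.divisors.image (l * ·) := by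
    ext d
    simp only [Finset.mem_filter, Nat.mem_divisors, Finset.mem_image]
    constructor
    · rintro ⟨⟨h1, h2⟩, e, rfl⟩
      exact ⟨e, ⟨Nat.dvd_of_mul_dvd_mul_left hl0.bot_lt h1, hk0⟩, rfl⟩
    · rintro ⟨e, ⟨h1, h2⟩, rfl⟩
      exact ⟨⟨mul_dvd_mul_left l h1, hm.ne_zero⟩, Dvd.intro _ rfl⟩
  rw [himg, Finset.sum_image (fun a _ b _ hab => Nat.eq_of_mul_eq_mul_left hl0.bot_lt hab)]
  have h1 : ∀ e ∈ k.divisors, (μ (l * e) : ℝ) = μ l * μ e := by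
    intro e he
    rw [ArithmeticFunction.isMultiplicative_moebius.map_mul_of_coprime
      (hlk.coprime_dvd_right (Nat.dvd_of_mem_divisors he))]
    push_cast; rfl
  rw [Finset.sum_congr rfl h1, ← Finset.mul_sum]
  have h2 : ∑ e ∈ k.divisors, (μ e : ℝ) = if k = 1 then 1 else 0 := by
    have := congrArg (fun f : ArithmeticFunction ℤ => f k) ArithmeticFunction.moebius_mul_coe_zeta
    rw [ArithmeticFunction.coe_mul_zeta_apply, ArithmeticFunction.one_apply] at this
    exact_mod_cast this
  rw [h2]
  have : l * k = l ↔ k = 1 := by simp [hl0]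
  simp [this]

/-- The sum `∑_{l ∣ P, l ≤ R} g(l)` of the Selberg terms of the sieve `s`, whose inverse is the
minimum of the main term over `Λ²` weights supported on `d ≤ R`. -/
noncomputable def selbergSum (s : BoundingSieve) (R : ℕ) : ℝ :=
  ∑ l ∈ s.prodPrimes.divisors with l ≤ R, s.selbergTerms l

/-- Selberg's weights: the `w d`, supported on divisors `d ≤ R` of `P`, which minimise the main term
of the `Λ²` sieve subject to `w 1 = 1`. -/
noncomputable def selbergWeight (s : BoundingSieve) (R d : ℕ) : ℝ :=
  if d ∣ s.prodPrimes then
    (s.nu d)⁻¹ * μ d *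
      ((∑ l ∈ s.prodPrimes.divisors with d ∣ l ∧ l ≤ R, s.selbergTerms l) / selbergSum s R)
  else 0

theorem selbergSum_pos (s : BoundingSieve) {R : ℕ} (hR : 1 ≤ R) : 0 < selbergSum s R := by
  apply Finset.sum_pos
  · intro l hl
    exact selbergTerms_pos (Nat.dvd_of_mem_divisors (Finset.mem_filter.1 hl).1)
  · exact ⟨1, by simp [hR, prodPrimes_ne_zero]⟩

theorem selbergWeight_one (s : BoundingSieve) {R : ℕ} (hR : 1 ≤ R) : selbergWeight s R 1 = 1 := by
  have := (selbergSum_pos s hR).ne'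
  simp [selbergWeight, s.nu_mult.map_one]
  exact div_self this

theorem selbergWeight_eq_zero (s : BoundingSieve) {R d : ℕ} (hd : R < d) :
    selbergWeight s R d = 0 := by
  unfold selbergWeight
  split_ifs with h
  · rw [Finset.sum_eq_zero]
    · simp
    · intro l hl
      simp only [Finset.mem_filter, Nat.mem_divisors] at hl
      have := Nat.le_of_dvd (Nat.pos_of_dvd_of_pos hl.1.1 hl.1.2.bot_lt) hl.2.1
      omega
  · rfl

/-- A crude bound for the weights: it loses a power of `R`, which is harmless because the level
of the sieve is later taken to be a small power of the length of the sifted set. -/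
theorem abs_selbergWeight_le (s : BoundingSieve) {R d : ℕ} (hR : 1 ≤ R) (hd : d ∣ s.prodPrimes) :
    |selbergWeight s R d| ≤ (s.nu d)⁻¹ := by
  have hS := selbergSum_pos s hR
  have hν := inv_pos.2 (nu_pos_of_dvd_prodPrimes hd)
  rw [selbergWeight, if_pos hd, abs_mul, abs_mul, abs_of_pos hν]
  have h1 : |(μ d : ℝ)| ≤ 1 := by exact_mod_cast ArithmeticFunction.abs_moebius_le_one
  have h0 : 0 ≤ ∑ l ∈ s.prodPrimes.divisors with d ∣ l ∧ l ≤ R, s.selbergTerms l :=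
    Finset.sum_nonneg fun l hl =>
      (selbergTerms_pos (Nat.dvd_of_mem_divisors (Finset.mem_filter.1 hl).1)).le
  have h2 : ∑ l ∈ s.prodPrimes.divisors with d ∣ l ∧ l ≤ R, s.selbergTerms l ≤ selbergSum s R := by
    apply Finset.sum_le_sum_of_subset_of_nonneg
    · intro l hl
      simp only [Finset.mem_filter] at hl ⊢
      exact ⟨hl.1, hl.2.2⟩
    · intro l hl _
      exact (selbergTerms_pos (Nat.dvd_of_mem_divisors (Finset.mem_filter.1 hl).1)).le
  rw [abs_of_nonneg (div_nonneg h0 hS.le)]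
  have h3 := (div_le_one hS).2 h2
  have h4 := div_nonneg h0 hS.le
  calc _ ≤ (s.nu d)⁻¹ * 1 * 1 := by gcongr
    _ = _ := by ring

/-- In the coordinates that diagonalise the main term, Selberg's weights become
`μ(l) g(l) / ∑ g` for `l ≤ R`; this is Möbius inversion over the divisors of `P`. -/
theorem selbergWeight_diag (s : BoundingSieve) {R l : ℕ} (hl : l ∣ s.prodPrimes) :
    (∑ d ∈ s.prodPrimes.divisors, if l ∣ d then s.nu d * selbergWeight s R d else 0) =
      if l ≤ R then μ l * s.selbergTerms l / selbergSum s R else 0 := by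
  have h1 : ∀ d ∈ s.prodPrimes.divisors, (if l ∣ d then s.nu d * selbergWeight s R d else 0) =
      ∑ m ∈ s.prodPrimes.divisors, if m ≤ R then
        (if l ∣ d ∧ d ∣ m then (μ d : ℝ) else 0) * (s.selbergTerms m / selbergSum s R) else 0 := by
    intro d hd
    have hd := Nat.dvd_of_mem_divisors hd
    by_cases hld : l ∣ d
    · rw [if_pos hld, selbergWeight, if_pos hd, Finset.sum_filter, Finset.sum_div, ← mul_assoc,
        ← mul_assoc, mul_inv_cancel₀ (nu_ne_zero hd), one_mul, Finset.mul_sum]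
      apply Finset.sum_congr rfl
      intro m _
      by_cases h1 : d ∣ m <;> by_cases h2 : m ≤ R <;> simp [h1, h2, hld]
    · simp [hld]
  rw [Finset.sum_congr rfl h1, Finset.sum_comm]
  have h2 : ∀ m ∈ s.prodPrimes.divisors, (∑ d ∈ s.prodPrimes.divisors, if m ≤ R then
        (if l ∣ d ∧ d ∣ m then (μ d : ℝ) else 0) * (s.selbergTerms m / selbergSum s R) else 0) =
        if m = l then (if l ≤ R then μ l * s.selbergTerms l / selbergSum s R else 0) else 0 := by
    intro m hm
    have hm := Nat.dvd_of_mem_divisors hm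
    by_cases hmR : m ≤ R
    · simp only [if_pos hmR]
      rw [← Finset.sum_mul, ← Finset.sum_filter]
      have : s.prodPrimes.divisors.filter (fun d => l ∣ d ∧ d ∣ m) =
          m.divisors.filter (l ∣ ·) := by
        ext d
        have hm0 : m ≠ 0 := (squarefree_of_dvd_prodPrimes hm).ne_zero
        simp only [Finset.mem_filter, Nat.mem_divisors]
        exact ⟨fun h => ⟨⟨h.2.2, hm0⟩, h.2.1⟩,
          fun h => ⟨⟨h.1.1.trans hm, prodPrimes_ne_zero⟩, h.2, h.1.1⟩⟩
      rw [this]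
      by_cases hlm : l ∣ m
      · rw [sum_moebius_between (squarefree_of_dvd_prodPrimes hm) hlm]
        by_cases h : m = l
        · subst h; simp [hmR, mul_div_assoc]
        · simp [h]
      · have hne : m ≠ l := fun h => hlm (h ▸ dvd_rfl)
        rw [if_neg hne, Finset.sum_eq_zero, zero_mul]
        intro d hd
        simp only [Finset.mem_filter, Nat.mem_divisors] at hd
        exact absurd (hd.2.trans hd.1.1) hlm
    · simp only [if_neg hmR, Finset.sum_const_zero]
      by_cases h : m = l
      · subst h; simp [hmR]
      · simp [h]
  rw [Finset.sum_congr rfl h2, Finset.sum_ite_eq' , if_pos (Nat.mem_divisors.2 ⟨hl, prodPrimes_ne_zero⟩)]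

theorem mainSum_selberg (s : BoundingSieve) {R : ℕ} (hR : 1 ≤ R) :
    s.mainSum (lambdaSquared (selbergWeight s R)) = (selbergSum s R)⁻¹ := by
  have hS := selbergSum_pos s hR
  rw [mainSum_lambdaSquared_eq_sum_mul_sum_sq]
  have h1 : ∀ l ∈ s.prodPrimes.divisors, (s.selbergTerms l)⁻¹ *
      (∑ d ∈ s.prodPrimes.divisors, if l ∣ d then s.nu d * selbergWeight s R d else 0) ^ 2 =
      if l ≤ R then s.selbergTerms l * ((selbergSum s R)⁻¹) ^ 2 else 0 := by
    intro l hl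
    have hl := Nat.dvd_of_mem_divisors hl
    rw [selbergWeight_diag s hl]
    split_ifs with h
    · have hg := (selbergTerms_pos hl).ne'
      have hμ : (μ l : ℝ) ^ 2 = 1 := by
        exact_mod_cast ArithmeticFunction.moebius_sq_eq_one_of_squarefree
          (squarefree_of_dvd_prodPrimes hl)
      rw [div_pow, mul_pow, hμ]
      field_simp
    · simp
  rw [Finset.sum_congr rfl h1, ← Finset.sum_filter, ← Finset.sum_mul]
  change selbergSum s R * _ = _
  field_simp

/-- There are at most `R²` pairs `(d₁, d₂)`, each contributing at most `R² · lcm(d₁, d₂) ≤ R⁴`. -/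
theorem errSum_selberg (s : BoundingSieve) {R : ℕ} (hR : 1 ≤ R)
    (hν : ∀ d, d ∣ s.prodPrimes → (s.nu d)⁻¹ ≤ d)
    (hrem : ∀ d, d ∣ s.prodPrimes → |s.rem d| ≤ d) :
    s.errSum (lambdaSquared (selbergWeight s R)) ≤ (R : ℝ) ^ 6 := by
  set w := selbergWeight s R with hw
  have hwR : ∀ d, d ∣ s.prodPrimes → |w d| ≤ if d ≤ R then (R : ℝ) else 0 := by
    intro d hd
    split_ifs with h
    · exact ((abs_selbergWeight_le s hR hd).trans (hν d hd)).trans (by exact_mod_cast h)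
    · rw [hw, selbergWeight_eq_zero s (not_le.1 h), abs_zero]
  have key : s.errSum (lambdaSquared w) ≤ ∑ d ∈ s.prodPrimes.divisors,
      ∑ d1 ∈ s.prodPrimes.divisors, ∑ d2 ∈ s.prodPrimes.divisors,
        if d = d1.lcm d2 then |w d1| * |w d2| * |s.rem d| else 0 := by
    unfold errSum
    apply Finset.sum_le_sum
    intro d hd
    have hd := Nat.dvd_of_mem_divisors hd
    have hsub : d.divisors ⊆ s.prodPrimes.divisors := Nat.divisors_subset_of_dvd prodPrimes_ne_zero hd
    calc |lambdaSquared w d| * |s.rem d|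
        ≤ (∑ d1 ∈ d.divisors, ∑ d2 ∈ d.divisors, if d = d1.lcm d2 then |w d1| * |w d2| else 0) *
          |s.rem d| := by
          gcongr
          unfold lambdaSquared
          refine (Finset.abs_sum_le_sum_abs _ _).trans (Finset.sum_le_sum fun d1 _ => ?_)
          refine (Finset.abs_sum_le_sum_abs _ _).trans (Finset.sum_le_sum fun d2 _ => ?_)
          split_ifs
          · rw [abs_mul]
          · simp
      _ = ∑ d1 ∈ d.divisors, ∑ d2 ∈ d.divisors,
          if d = d1.lcm d2 then |w d1| * |w d2| * |s.rem d| else 0 := by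
          simp_rw [Finset.sum_mul, ite_mul, zero_mul]
      _ ≤ ∑ d1 ∈ d.divisors, ∑ d2 ∈ s.prodPrimes.divisors,
          if d = d1.lcm d2 then |w d1| * |w d2| * |s.rem d| else 0 := by
          refine Finset.sum_le_sum fun d1 _ => Finset.sum_le_sum_of_subset_of_nonneg hsub ?_
          intros; split_ifs <;> positivity
      _ ≤ _ := by
          refine Finset.sum_le_sum_of_subset_of_nonneg hsub ?_
          intros
          refine Finset.sum_nonneg fun _ _ => ?_
          split_ifs <;> positivity
  refine key.trans ?_
  rw [Finset.sum_comm]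
  have hle : ∀ d1 ∈ s.prodPrimes.divisors, (∑ d ∈ s.prodPrimes.divisors,
      ∑ d2 ∈ s.prodPrimes.divisors,
        if d = d1.lcm d2 then |w d1| * |w d2| * |s.rem d| else 0) ≤
      ∑ d2 ∈ s.prodPrimes.divisors, if d1 ≤ R then (if d2 ≤ R then (R : ℝ) ^ 4 else 0) else 0 := by
    intro d1 hd1
    rw [Finset.sum_comm]
    refine Finset.sum_le_sum fun d2 hd2 => ?_
    have hd1 := Nat.dvd_of_mem_divisors hd1
    have hd2 := Nat.dvd_of_mem_divisors hd2
    have hlcm : d1.lcm d2 ∣ s.prodPrimes := Nat.lcm_dvd hd1 hd2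
    rw [Finset.sum_ite_eq', if_pos (Nat.mem_divisors.2 ⟨hlcm, prodPrimes_ne_zero⟩)]
    have h1 := hwR d1 hd1
    have h2 := hwR d2 hd2
    have h3 := hrem _ hlcm
    split_ifs with c1 c2
    · rw [if_pos c1] at h1
      rw [if_pos c2] at h2
      have h4 : ((d1.lcm d2 : ℕ) : ℝ) ≤ R * R := by
        have : d1.lcm d2 ≤ d1 * d2 := Nat.div_le_self _ _
        exact_mod_cast this.trans (Nat.mul_le_mul c1 c2)
      calc _ ≤ (R : ℝ) * R * (R * R) := by
            gcongr
            exact h3.trans h4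
        _ = _ := by ring
    · rw [if_neg c2] at h2
      rw [le_antisymm h2 (abs_nonneg _)]; simp
    · rw [if_neg c1] at h1
      rw [le_antisymm h1 (abs_nonneg _)]; simp
  refine (Finset.sum_le_sum hle).trans ?_
  have hcard : ((s.prodPrimes.divisors.filter (· ≤ R)).card : ℝ) ≤ R := by
    have : s.prodPrimes.divisors.filter (· ≤ R) ⊆ Finset.Icc 1 R := by
      intro d hd
      simp only [Finset.mem_filter, Finset.mem_Icc] at hd ⊢
      exact ⟨Nat.pos_of_mem_divisors hd.1, hd.2⟩
    have := Finset.card_le_card this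
    rw [Nat.card_Icc] at this
    exact_mod_cast this
  have hinner : ∀ d1 ∈ s.prodPrimes.divisors, (∑ d2 ∈ s.prodPrimes.divisors,
      if d1 ≤ R then (if d2 ≤ R then (R : ℝ) ^ 4 else 0) else 0) ≤
      if d1 ≤ R then (R : ℝ) * R ^ 4 else 0 := by
    intro d1 _
    split_ifs
    · rw [← Finset.sum_filter, Finset.sum_const, nsmul_eq_mul]
      gcongr
    · simp
  refine (Finset.sum_le_sum hinner).trans ?_
  rw [← Finset.sum_filter, Finset.sum_const, nsmul_eq_mul]
  calc _ ≤ (R : ℝ) * (R * R ^ 4) := by gcongr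
    _ = _ := by ring

/-- Selberg's upper bound sieve for problems with `ν(d) ≥ 1 / d` and remainders at most `d`. -/
theorem siftedSum_le_selberg (s : BoundingSieve) {R : ℕ} (hR : 1 ≤ R)
    (hν : ∀ d, d ∣ s.prodPrimes → (s.nu d)⁻¹ ≤ d)
    (hrem : ∀ d, d ∣ s.prodPrimes → |s.rem d| ≤ d) :
    s.siftedSum ≤ s.totalMass / selbergSum s R + (R : ℝ) ^ 6 := by
  have h := siftedSum_le_mainSum_errSum_of_upperMoebius (s := s) _
    (upperMoebius_lambdaSquared _ (selbergWeight_one s hR))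
  rw [mainSum_selberg s hR] at h
  rw [div_eq_mul_inv]
  linarith [errSum_selberg s hR hν hrem]

/-! ### A lower bound for the Selberg sum -/

/-- The sum of `1 / m` over the squarefree `m ≤ M` coprime to `k`. -/
noncomputable def sqfreeSum (k M : ℕ) : ℝ :=
  ∑ m ∈ Finset.Icc 1 M with Squarefree m ∧ m.Coprime k, (1 / m : ℝ)

/-- Every `m > 0` is `g s² e` with `e` squarefree and coprime to `k`, and `g ∣ k`: split off the
squarefree part of `m`, then its greatest common divisor with `k`. -/
theorem exists_factorisation (k m : ℕ) (hm : 0 < m) :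
    ∃ g s e : ℕ, g ∣ k ∧ 0 < s ∧ 0 < e ∧ Squarefree e ∧ e.Coprime k ∧ g * s ^ 2 * e = m := by
  obtain ⟨a, b, hab, ha⟩ := Nat.sq_mul_squarefree m
  obtain ⟨e, he⟩ := Nat.gcd_dvd_left a k
  have hb : 0 < b := Nat.pos_of_ne_zero (by rintro rfl; simp at hab; omega)
  have he0 : 0 < e := Nat.pos_of_ne_zero (by
    rintro rfl; rw [mul_zero] at he; rw [he] at hab; simp at hab; omega)
  rw [he] at ha
  refine ⟨a.gcd k, b, e, Nat.gcd_dvd_right a k, hb, he0, Squarefree.of_mul_right ha, ?_, ?_⟩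
  · have h1 : (a.gcd k).Coprime e := Nat.coprime_of_squarefree_mul ha
    apply Nat.coprime_of_dvd
    intro p hp hpe hpk
    have hpg : p ∣ a.gcd k := Nat.dvd_gcd (by rw [he]; exact hpe.mul_left _) hpk
    exact Nat.not_coprime_of_dvd_of_dvd hp.one_lt hpg hpe h1
  · rw [← hab]
    conv_rhs => rw [he]
    ring

/-- Writing each `m ≤ M` as `g s² e` bounds the harmonic sum by
`(∑_{g ∣ k} 1 / g) (∑ 1 / s²)` times the squarefree sum. -/
theorem log_le_sqfreeSum (k : ℕ) (hk : 0 < k) :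
    ∃ C : ℝ, 0 < C ∧ ∀ M : ℕ, Real.log (M + 1) ≤ C * sqfreeSum k M := by
  have hsum : Summable fun s : ℕ => (1 / (s : ℝ) ^ 2) := Real.summable_one_div_nat_pow.2 (by norm_num)
  refine ⟨(k.divisors.card : ℝ) * ((∑' s : ℕ, (1 / (s : ℝ) ^ 2)) + 1), ?_, fun M => ?_⟩
  · have : 0 < k.divisors.card := Finset.card_pos.2 ⟨1, by simp [hk.ne']⟩
    have h0 : 0 ≤ ∑' s : ℕ, (1 / (s : ℝ) ^ 2) := tsum_nonneg fun s => by positivity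
    positivity
  have hT : 0 ≤ sqfreeSum k M := Finset.sum_nonneg fun _ _ => by positivity
  set E := (Finset.Icc 1 M).filter (fun m => Squarefree m ∧ m.Coprime k) with hE
  have h1 : Real.log (M + 1) ≤ ∑ m ∈ Finset.Icc 1 M, (1 / m : ℝ) := by
    have := log_add_one_le_harmonic M
    rw [harmonic_eq_sum_Icc] at this
    push_cast at this
    simpa [one_div] using this
  have h2 : ∑ m ∈ Finset.Icc 1 M, (1 / m : ℝ) ≤
      ∑ t ∈ k.divisors ×ˢ (Finset.Icc 1 M ×ˢ E), (1 / ((t.1 * t.2.1 ^ 2 * t.2.2 : ℕ) : ℝ)) := by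
    have hsub : Finset.Icc 1 M ⊆
        (k.divisors ×ˢ (Finset.Icc 1 M ×ˢ E)).image (fun t => t.1 * t.2.1 ^ 2 * t.2.2) := by
      intro m hm
      rw [Finset.mem_Icc] at hm
      obtain ⟨g, s, e, hg, hs, he, hsq, hco, rfl⟩ := exists_factorisation k m hm.1
      have hg0 : 0 < g := Nat.pos_of_dvd_of_pos hg hk
      rw [Finset.mem_image]
      refine ⟨(g, s, e), ?_, rfl⟩
      simp only [hE, Finset.mem_product, Nat.mem_divisors, Finset.mem_Icc, Finset.mem_filter]
      have hs' : s ≤ g * s ^ 2 * e := Nat.le_of_dvd hm.1 ⟨g * s * e, by ring⟩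
      have he' : e ≤ g * s ^ 2 * e := Nat.le_of_dvd hm.1 (Dvd.intro_left _ rfl)
      exact ⟨⟨hg, hk.ne'⟩, ⟨hs, hs'.trans hm.2⟩, ⟨he, he'.trans hm.2⟩, hsq, hco⟩
    refine (Finset.sum_le_sum_of_subset_of_nonneg hsub fun _ _ _ => by positivity).trans ?_
    exact Finset.sum_image_le_of_nonneg (f := fun m : ℕ => (1 / m : ℝ)) (fun _ _ => by positivity)
  have h3 : ∑ t ∈ k.divisors ×ˢ (Finset.Icc 1 M ×ˢ E), (1 / ((t.1 * t.2.1 ^ 2 * t.2.2 : ℕ) : ℝ)) =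
      (∑ g ∈ k.divisors, (1 / g : ℝ)) * ((∑ s ∈ Finset.Icc 1 M, (1 / (s : ℝ) ^ 2)) *
        sqfreeSum k M) := by
    unfold sqfreeSum
    rw [Finset.sum_product, Finset.sum_mul]
    refine Finset.sum_congr rfl fun g _ => ?_
    rw [Finset.sum_product, Finset.sum_mul, Finset.mul_sum]
    refine Finset.sum_congr rfl fun s _ => ?_
    rw [Finset.mul_sum, Finset.mul_sum]
    refine Finset.sum_congr rfl fun e _ => ?_
    push_cast
    rw [one_div_mul_one_div, one_div_mul_one_div, mul_assoc]
  have h4 : (∑ g ∈ k.divisors, (1 / g : ℝ)) ≤ k.divisors.card := by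
    rw [Finset.card_eq_sum_ones, Nat.cast_sum]
    refine Finset.sum_le_sum fun g hg => ?_
    have : (1 : ℝ) ≤ g := by exact_mod_cast Nat.pos_of_mem_divisors hg
    rw [div_le_iff₀ (by linarith)]
    simpa using this
  have h5 : (∑ s ∈ Finset.Icc 1 M, (1 / (s : ℝ) ^ 2)) ≤ (∑' s : ℕ, (1 / (s : ℝ) ^ 2)) + 1 := by
    have := hsum.sum_le_tsum (Finset.Icc 1 M) (fun _ _ => by positivity)
    linarith
  calc _ ≤ _ := h1
    _ ≤ _ := h2
    _ = _ := h3
    _ ≤ (k.divisors.card : ℝ) * (((∑' s : ℕ, (1 / (s : ℝ) ^ 2)) + 1) * sqfreeSum k M) := by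
        gcongr
    _ = _ := by ring

/-- For squarefree `l`, a pair `(a, b)` with least common multiple `l` is determined by `a ∣ l` and
`c = gcd(a, b) ∣ a`, and `a b = l c`; so the sum is at most
`(1 / l) ∑_{a ∣ l} ∑_{c ∣ a} 1 / c = ∏_{p ∣ l} (2 + 1 / p) / p`. -/
theorem sum_lcm_eq_le (A : Finset (ℕ × ℕ)) (l : ℕ) (hl : Squarefree l)
    (hA : ∀ t ∈ A, t.1.lcm t.2 = l) :
    ∑ t ∈ A, (1 / (t.1 * t.2) : ℝ) ≤ ∏ p ∈ l.primeFactors, ((2 + 1 / p) / p : ℝ) := by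
  have hl0 := hl.ne_zero
  have h1 : ∀ t ∈ A, (1 / (t.1 * t.2) : ℝ) = 1 / l * (1 / (t.1.gcd t.2 : ℕ)) := by
    intro t ht
    rw [one_div_mul_one_div, ← Nat.cast_mul, ← Nat.cast_mul, ← hA t ht, mul_comm (t.1.lcm t.2),
      Nat.gcd_mul_lcm]
  rw [Finset.sum_congr rfl h1, ← Finset.mul_sum]
  have h2 : ∑ t ∈ A, (1 / (t.1.gcd t.2 : ℕ) : ℝ) ≤
      ∑ a ∈ l.divisors, ∑ c ∈ a.divisors, (1 / c : ℝ) := by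
    rw [Finset.sum_sigma']
    have hinj : Set.InjOn (fun t : ℕ × ℕ => (⟨t.1, t.1.gcd t.2⟩ : Σ _ : ℕ, ℕ)) A := by
      rintro ⟨a, b⟩ hab ⟨a', b'⟩ hab' heq
      simp only [Sigma.mk.injEq, heq_eq_eq] at heq
      obtain ⟨rfl, h⟩ := heq
      have e1 := Nat.gcd_mul_lcm a b
      have e2 := Nat.gcd_mul_lcm a b'
      have e3 := hA _ hab
      have e4 := hA _ hab'
      simp only at e3 e4
      rw [e3] at e1
      rw [e4, ← h, e1] at e2
      have ha : 0 < a := Nat.pos_of_ne_zero (by rintro rfl; simp at e3; omega)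
      rw [Nat.eq_of_mul_eq_mul_left ha e2]
    rw [← Finset.sum_image (f := fun x : Σ _ : ℕ, ℕ => (1 / x.2 : ℝ)) hinj]
    refine Finset.sum_le_sum_of_subset_of_nonneg ?_ fun _ _ _ => by positivity
    intro x hx
    obtain ⟨t, ht, rfl⟩ := Finset.mem_image.1 hx
    have hd : t.1 ∣ l := hA t ht ▸ Nat.dvd_lcm_left _ _
    simp only [Finset.mem_sigma, Nat.mem_divisors]
    exact ⟨⟨hd, hl0⟩, Nat.gcd_dvd_left _ _, fun h => hl0 (Nat.eq_zero_of_zero_dvd (h ▸ hd))⟩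
  have h3 : ∀ a ∈ l.divisors, ∑ c ∈ a.divisors, (1 / c : ℝ) =
      ArithmeticFunction.prodPrimeFactors (fun p => (1 + 1 / p : ℝ)) a := by
    intro a ha
    have hsq : Squarefree a := hl.squarefree_of_dvd (Nat.dvd_of_mem_divisors ha)
    rw [ArithmeticFunction.prodPrimeFactors_apply hsq.ne_zero]
    have := (ArithmeticFunction.IsMultiplicative.prodPrimeFactors
      (fun p => (1 / p : ℝ))).prodPrimeFactors_one_add_of_squarefree hsq
    have e1 : ∀ c, Squarefree c →
        ArithmeticFunction.prodPrimeFactors (fun p => (1 / p : ℝ)) c = 1 / c := by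
      intro c hc
      rw [ArithmeticFunction.prodPrimeFactors_apply hc.ne_zero, Finset.prod_div_distrib,
        Finset.prod_const_one, ← Nat.cast_prod, Nat.prod_primeFactors_of_squarefree hc]
    rw [Finset.sum_congr rfl fun c hc =>
      (e1 c (hsq.squarefree_of_dvd (Nat.dvd_of_mem_divisors hc))).symm, ← this]
    exact Finset.prod_congr rfl fun p hp => by
      rw [e1 p (Nat.prime_of_mem_primeFactors hp).squarefree]
  have h4 : ∑ a ∈ l.divisors, ArithmeticFunction.prodPrimeFactors (fun p => (1 + 1 / p : ℝ)) a =
      ∏ p ∈ l.primeFactors, (2 + 1 / p : ℝ) := by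
    rw [← (ArithmeticFunction.IsMultiplicative.prodPrimeFactors
      (fun p => (1 + 1 / p : ℝ))).prodPrimeFactors_one_add_of_squarefree hl]
    refine Finset.prod_congr rfl fun p hp => ?_
    have hp := Nat.prime_of_mem_primeFactors hp
    rw [ArithmeticFunction.prodPrimeFactors_apply hp.ne_zero, hp.primeFactors,
      Finset.prod_singleton]
    ring
  rw [Finset.sum_congr rfl h3, h4] at h2
  have h5 : ∏ p ∈ l.primeFactors, ((2 + 1 / p) / p : ℝ) =
      1 / l * ∏ p ∈ l.primeFactors, (2 + 1 / p : ℝ) := by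
    rw [Finset.prod_div_distrib, ← Nat.cast_prod, Nat.prod_primeFactors_of_squarefree hl]
    ring
  rw [h5]
  gcongr

/-- Expand the square as a sum over pairs `(a, b)` and group the pairs by `lcm(a, b) ≤ M²`. -/
theorem sqfreeSum_sq_le (k M : ℕ) :
    sqfreeSum k M ^ 2 ≤ ∑ l ∈ Finset.Icc 1 (M ^ 2) with Squarefree l ∧ l.Coprime k,
      ∏ p ∈ l.primeFactors, ((2 + 1 / p) / p : ℝ) := by
  unfold sqfreeSum
  rw [sq, Finset.sum_mul_sum, ← Finset.sum_product']
  rw [← Finset.sum_fiberwise_of_maps_to (g := fun t : ℕ × ℕ => t.1.lcm t.2)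
    (t := (Finset.Icc 1 (M ^ 2)).filter fun l => Squarefree l ∧ l.Coprime k)]
  · refine Finset.sum_le_sum fun l hl => ?_
    simp only [Finset.mem_filter] at hl
    simp_rw [one_div_mul_one_div]
    exact sum_lcm_eq_le _ l hl.2.1 fun t ht => (Finset.mem_filter.1 ht).2
  · rintro ⟨a, b⟩ h
    simp only [Finset.mem_product, Finset.mem_filter, Finset.mem_Icc] at h ⊢
    obtain ⟨⟨⟨ha1, ha2⟩, ha3, ha4⟩, ⟨hb1, hb2⟩, hb3, hb4⟩ := h
    have hle : a.lcm b ≤ a * b := Nat.div_le_self _ _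
    refine ⟨⟨Nat.lcm_pos ha1 hb1, hle.trans ?_⟩, ?_, ?_⟩
    · rw [sq]; exact Nat.mul_le_mul ha2 hb2
    · have hl0 : a.lcm b ≠ 0 := (Nat.lcm_pos ha1 hb1).ne'
      rw [Nat.squarefree_iff_factorization_le_one hl0]
      intro p
      rw [Nat.factorization_lcm (by omega) (by omega), Finsupp.sup_apply]
      exact sup_le ((Nat.squarefree_iff_factorization_le_one (by omega)).1 ha3 p)
        ((Nat.squarefree_iff_factorization_le_one (by omega)).1 hb3 p)
    · exact Nat.Coprime.coprime_dvd_left (Nat.lcm_dvd_mul a b) (Nat.Coprime.mul_left ha4 hb4)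

/-! ### An upper bound for the number of prime pairs -/

/-- The primes `p ≤ R` that do not divide `2 h`. The prime `2` must be left out because
`m (m + h)` is always even when `h` is odd. -/
def siftingPrimes (h R : ℕ) : Finset ℕ :=
  (Finset.Icc 1 R).filter fun p => p.Prime ∧ p.Coprime (2 * h)

theorem dvd_prod_siftingPrimes {h R l : ℕ} (hl : Squarefree l) (hco : l.Coprime (2 * h))
    (hR : l ≤ R) : l ∣ ∏ p ∈ siftingPrimes h R, p := by
  rw [← Nat.prod_primeFactors_of_squarefree hl]
  apply Finset.prod_dvd_prod_of_subset
  intro p hp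
  have hpp := Nat.prime_of_mem_primeFactors hp
  have hd := Nat.dvd_of_mem_primeFactors hp
  simp only [siftingPrimes, Finset.mem_filter, Finset.mem_Icc]
  exact ⟨⟨hpp.one_le, (Nat.le_of_dvd hl.ne_zero.bot_lt hd).trans hR⟩, hpp, hco.coprime_dvd_left hd⟩

theorem prime_dvd_prod_siftingPrimes {h R p : ℕ} (hp : p.Prime) :
    p ∣ ∏ q ∈ siftingPrimes h R, q ↔ p ∈ siftingPrimes h R := by
  constructor
  · intro hd
    obtain ⟨q, hq, hpq⟩ := (Prime.dvd_finsetProd_iff hp.prime _).1 hd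
    have := (Finset.mem_filter.1 hq).2.1
    rwa [(Nat.prime_dvd_prime_iff_eq hp this).1 hpq]
  · exact fun hm => Finset.dvd_prod_of_mem _ hm

theorem three_le_of_mem_siftingPrimes {h R p : ℕ} (hp : p ∈ siftingPrimes h R) : 3 ≤ p := by
  obtain ⟨_, hpp, hco⟩ := Finset.mem_filter.1 hp
  have h2 := hpp.two_le
  rcases h2.eq_or_lt with rfl | h2
  · exact absurd (hco.coprime_dvd_right (dvd_mul_right 2 h)) (by decide)
  · exact h2

theorem strictMono_mul_add (h : ℕ) (hh : 0 < h) : StrictMono fun m : ℕ => m * (m + h) := by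
  intro a b hab
  simp only
  nlinarith

/-- The sieve problem for prime pairs: the values `m (m + h)` with `m < N`, each of weight one,
are sifted by `siftingPrimes h R`, with density `2 / p` at each prime. The values are distinct when
`h > 0`, so the set of values faithfully represents the set of arguments. -/
noncomputable def pairSieve (h R N : ℕ) : BoundingSieve where
  support := (Finset.range N).image fun m => m * (m + h)
  prodPrimes := ∏ p ∈ siftingPrimes h R, p
  prodPrimes_squarefree := by
    apply Finset.squarefree_prod_of_pairwise_isCoprime
    · intro p hp q hq hpq
      exact Nat.coprime_iff_isRelPrime.1 ((Nat.coprime_primes (Finset.mem_filter.1 hp).2.1 (Finset.mem_filter.1 hq).2.1).2 hpq)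
    · intro p hp
      exact (Finset.mem_filter.1 hp).2.1.squarefree
  weights := fun _ => 1
  weights_nonneg := fun _ => zero_le_one
  totalMass := N
  nu := ArithmeticFunction.prodPrimeFactors fun p => (2 / p : ℝ)
  nu_mult := ArithmeticFunction.IsMultiplicative.prodPrimeFactors _
  nu_pos_of_prime := fun p hp _ => by
    rw [ArithmeticFunction.prodPrimeFactors_apply hp.ne_zero, hp.primeFactors,
      Finset.prod_singleton]
    have := hp.pos
    positivity
  nu_lt_one_of_prime := fun p hp hd => by
    rw [ArithmeticFunction.prodPrimeFactors_apply hp.ne_zero, hp.primeFactors,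
      Finset.prod_singleton]
    have h3 : (3 : ℝ) ≤ p := by
      exact_mod_cast three_le_of_mem_siftingPrimes ((prime_dvd_prod_siftingPrimes hp).1 hd)
    rw [div_lt_one (by linarith)]
    linarith

theorem pairSieve_nu_apply (h R N : ℕ) {d : ℕ} (hd : d ≠ 0) :
    (pairSieve h R N).nu d = ∏ p ∈ d.primeFactors, (2 / p : ℝ) :=
  ArithmeticFunction.prodPrimeFactors_apply hd

theorem coprime_of_dvd_pairSieve {h R N d : ℕ} (hd : d ∣ (pairSieve h R N).prodPrimes) :
    d.Coprime h := by
  apply Nat.coprime_of_dvd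
  intro p hp hpd hph
  have := (prime_dvd_prod_siftingPrimes hp).1 (hpd.trans hd)
  have hco := (Finset.mem_filter.1 this).2.2
  exact Nat.not_coprime_of_dvd_of_dvd hp.one_lt dvd_rfl (hph.mul_left 2) hco

theorem pairSieve_inv_nu_le {h R N d : ℕ} (hd : d ∣ (pairSieve h R N).prodPrimes) :
    ((pairSieve h R N).nu d)⁻¹ ≤ d := by
  have hsq : Squarefree d := squarefree_of_dvd_prodPrimes hd
  rw [pairSieve_nu_apply h R N hsq.ne_zero, ← Finset.prod_inv_distrib]
  calc ∏ p ∈ d.primeFactors, (2 / p : ℝ)⁻¹ ≤ ∏ p ∈ d.primeFactors, (p : ℝ) := by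
        refine Finset.prod_le_prod (fun p _ => by positivity) fun p _ => ?_
        rw [inv_div]
        have : (0 : ℝ) ≤ p := by positivity
        linarith
    _ = d := by rw [← Nat.cast_prod, Nat.prod_primeFactors_of_squarefree hsq]

theorem pairSieve_rem_le {h R N d : ℕ} (hh : 0 < h) (hd : d ∣ (pairSieve h R N).prodPrimes) :
    |(pairSieve h R N).rem d| ≤ d := by
  have hsq : Squarefree d := squarefree_of_dvd_prodPrimes hd
  have := abs_count_sub_le h d N hsq (coprime_of_dvd_pairSieve hd)
  rw [← pairSieve_nu_apply h R N hsq.ne_zero] at this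
  have hm : (pairSieve h R N).multSum d = Nat.count (fun m => d ∣ m * (m + h)) N := by
    change ∑ n ∈ (Finset.range N).image (fun m => m * (m + h)), (if d ∣ n then (1 : ℝ) else 0) = _
    rw [Finset.sum_image (strictMono_mul_add h hh).injective.injOn, Nat.count_eq_card_filter_range,
      Finset.sum_boole]
  rw [BoundingSieve.rem, hm]
  exact this

/-- Here `g(p) = 2 / (p - 2)`, which exceeds `2 / p + 1 / p²`. -/
theorem selbergTerms_ge {h R N l : ℕ} (hl : l ∣ (pairSieve h R N).prodPrimes) :
    ∏ p ∈ l.primeFactors, ((2 + 1 / p) / p : ℝ) ≤ (pairSieve h R N).selbergTerms l := by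
  have hsq : Squarefree l := squarefree_of_dvd_prodPrimes hl
  rw [selbergTerms_apply, pairSieve_nu_apply h R N hsq.ne_zero, ← Finset.prod_mul_distrib]
  refine Finset.prod_le_prod (fun p _ => by positivity) fun p hp => ?_
  have hpp := Nat.prime_of_mem_primeFactors hp
  have hmem := (prime_dvd_prod_siftingPrimes hpp).1 ((Nat.dvd_of_mem_primeFactors hp).trans hl)
  have h3 : (3 : ℝ) ≤ p := by exact_mod_cast three_le_of_mem_siftingPrimes hmem
  rw [pairSieve_nu_apply h R N hpp.ne_zero, hpp.primeFactors, Finset.prod_singleton]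
  have e : (1 - 2 / (p : ℝ))⁻¹ = p / (p - 2) := by
    rw [← inv_div]; field_simp
  rw [e, div_mul_div_comm, div_le_div_iff₀ (by linarith) (by nlinarith)]
  have : (2 + 1 / (p : ℝ)) * (p * (p - 2)) = 2 * p ^ 2 - 3 * p - 2 := by field_simp; ring
  rw [this]
  nlinarith

theorem sqfreeSum_sq_le_selbergSum (h M N : ℕ) :
    sqfreeSum (2 * h) M ^ 2 ≤ selbergSum (pairSieve h (M ^ 2) N) (M ^ 2) := by
  refine (sqfreeSum_sq_le _ _).trans ?_
  have hdvd : ∀ l ∈ (Finset.Icc 1 (M ^ 2)).filter fun l => Squarefree l ∧ l.Coprime (2 * h),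
      l ∣ (pairSieve h (M ^ 2) N).prodPrimes := by
    intro l hl
    simp only [Finset.mem_filter, Finset.mem_Icc] at hl
    exact dvd_prod_siftingPrimes hl.2.1 hl.2.2 hl.1.2
  refine (Finset.sum_le_sum fun l hl => selbergTerms_ge (hdvd l hl)).trans ?_
  refine Finset.sum_le_sum_of_subset_of_nonneg (fun l hl => ?_) fun l hl _ =>
    (selbergTerms_pos (Nat.dvd_of_mem_divisors (Finset.mem_filter.1 hl).1)).le
  have := (Finset.mem_Icc.1 (Finset.mem_filter.1 hl).1).2
  exact Finset.mem_filter.2 ⟨Nat.mem_divisors.2 ⟨hdvd l hl, prodPrimes_ne_zero⟩, this⟩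

/-- If `p > R` and `p`, `p + h` are prime, then `p (p + h)` has no prime factor up to `R`. -/
theorem card_pairs_le_siftedSum (h R N : ℕ) (hh : 0 < h) :
    (((Finset.range N).filter fun p => p.Prime ∧ (p + h).Prime).card : ℝ) ≤
      (R + 1) + (pairSieve h R N).siftedSum := by
  have hs : (pairSieve h R N).siftedSum =
      (((Finset.range N).filter fun m =>
        (∏ p ∈ siftingPrimes h R, p).Coprime (m * (m + h))).card : ℝ) := by
    change ∑ n ∈ (Finset.range N).image (fun m => m * (m + h)),
      (if (∏ p ∈ siftingPrimes h R, p).Coprime n then (1 : ℝ) else 0) = _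
    rw [Finset.sum_image (strictMono_mul_add h hh).injective.injOn, Finset.sum_boole]
  rw [hs]
  have hsub : ((Finset.range N).filter fun p => p.Prime ∧ (p + h).Prime) ⊆
      Finset.range (R + 1) ∪ (Finset.range N).filter fun m =>
        (∏ p ∈ siftingPrimes h R, p).Coprime (m * (m + h)) := by
    intro p hp
    simp only [Finset.mem_union, Finset.mem_filter, Finset.mem_range] at hp ⊢
    by_cases hpR : p < R + 1
    · exact Or.inl hpR
    · refine Or.inr ⟨hp.1, ?_⟩
      apply Nat.coprime_of_dvd
      intro q hq hqP hqm
      have hqR := (prime_dvd_prod_siftingPrimes hq).1 hqP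
      have hqR := (Finset.mem_Icc.1 (Finset.mem_filter.1 hqR).1).2
      rcases hq.dvd_mul.1 hqm with h1 | h1
      · have := (Nat.prime_dvd_prime_iff_eq hq hp.2.1).1 h1
        omega
      · have := (Nat.prime_dvd_prime_iff_eq hq hp.2.2).1 h1
        omega
  have := (Finset.card_le_card hsub).trans (Finset.card_union_le _ _)
  rw [Finset.card_range] at this
  exact_mod_cast this

theorem exists_nat_root {k N : ℕ} (hk : k ≠ 0) (hN : 1 ≤ N) :
    ∃ M : ℕ, 1 ≤ M ∧ M ^ k ≤ N ∧ N < (M + 1) ^ k := by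
  refine ⟨Nat.findGreatest (fun M => M ^ k ≤ N) N, ?_, ?_, ?_⟩
  · exact Nat.le_findGreatest hN (by simpa using hN)
  · exact Nat.findGreatest_spec (P := fun M => M ^ k ≤ N) hN (by simpa using hN)
  · by_contra! hcon
    have := Nat.le_findGreatest (P := fun M => M ^ k ≤ N) ((Nat.le_self_pow hk _).trans hcon) hcon
    omega

theorem sqrt_le_div_log_sq {x : ℝ} (hx : 1 < x) : √x ≤ 16 * (x / Real.log x ^ 2) := by
  have hlog : 0 < Real.log x := Real.log_pos hx
  have h1 : Real.log x ≤ x ^ (1 / 4 : ℝ) / (1 / 4) :=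
    Real.log_le_rpow_div (by linarith) (by norm_num)
  have h2 : Real.log x ^ 2 ≤ 16 * √x := by
    have : (x ^ (1 / 4 : ℝ)) ^ 2 = √x := by
      rw [Real.sqrt_eq_rpow, ← Real.rpow_natCast, ← Real.rpow_mul (by linarith)]; norm_num
    rw [← this]
    nlinarith
  have h3 : √x * √x = x := Real.mul_self_sqrt (by linarith)
  rw [← mul_div_assoc, le_div_iff₀ (by positivity)]
  nlinarith [Real.sqrt_nonneg x]

/-- The number of `p < N` with `p` and `p + h` prime is `O_h(N / log² N)`. -/
theorem card_prime_pairs_le (h : ℕ) (hh : 0 < h) :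
    ∃ K : ℝ, 0 ≤ K ∧ ∀ N : ℕ, 2 ≤ N →
      (((Finset.range N).filter fun p => p.Prime ∧ (p + h).Prime).card : ℝ) ≤
        K * (N / Real.log N ^ 2) := by
  obtain ⟨C, hC, hlog⟩ := log_le_sqfreeSum (2 * h) (by omega)
  refine ⟨576 * C ^ 2 + 48, by positivity, fun N hN => ?_⟩
  -- With `M ≈ N ^ (1 / 24)` and `R = M ^ 2`, the error `R ^ 6 = M ^ 12` is at most `√N`.
  obtain ⟨M, hM1, hMN, hNM⟩ : ∃ M : ℕ, 1 ≤ M ∧ M ^ 24 ≤ N ∧ N < (M + 1) ^ 24 := by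
    exact exists_nat_root (by norm_num) (by omega)
  have hN1 : (1 : ℝ) < N := by exact_mod_cast hN
  have hlogN : 0 < Real.log N := Real.log_pos hN1
  have hT : Real.log N / 24 ≤ C * sqfreeSum (2 * h) M := by
    refine le_trans ?_ (hlog M)
    have : Real.log N ≤ Real.log (((M + 1 : ℕ) : ℝ) ^ 24) :=
      Real.log_le_log (by linarith) (by exact_mod_cast hNM.le)
    rw [Real.log_pow] at this
    push_cast at this
    linarith
  have hS : (Real.log N / (24 * C)) ^ 2 ≤ selbergSum (pairSieve h (M ^ 2) N) (M ^ 2) := by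
    refine le_trans ?_ (sqfreeSum_sq_le_selbergSum h M N)
    have : Real.log N / (24 * C) ≤ sqfreeSum (2 * h) M := by
      rw [div_le_iff₀ (by positivity)]
      linarith
    gcongr
  have hsieve := siftedSum_le_selberg (pairSieve h (M ^ 2) N) (R := M ^ 2) (Nat.one_le_pow _ _ hM1)
    (fun d hd => pairSieve_inv_nu_le hd) (fun d hd => pairSieve_rem_le hh hd)
  have hmain : (N : ℝ) / selbergSum (pairSieve h (M ^ 2) N) (M ^ 2) ≤
      576 * C ^ 2 * (N / Real.log N ^ 2) := by
    calc _ ≤ (N : ℝ) / (Real.log N / (24 * C)) ^ 2 := by gcongr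
      _ = _ := by field_simp; ring
  have hcard := card_pairs_le_siftedSum h (M ^ 2) N hh
  have hM1' : (1 : ℝ) ≤ M := by exact_mod_cast hM1
  have hM12 : (M : ℝ) ^ 12 ≤ √N := by
    apply Real.le_sqrt_of_sq_le
    have h24 : ((M : ℝ) ^ 12) ^ 2 = (M : ℝ) ^ 24 := by ring
    rw [h24]
    exact_mod_cast hMN
  have hsqrt := sqrt_le_div_log_sq hN1
  have hM2 : (M : ℝ) ^ 2 ≤ M ^ 12 := pow_le_pow_right₀ hM1' (by norm_num)
  have hM0 : (1 : ℝ) ≤ M ^ 12 := one_le_pow₀ hM1'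
  have htm : (pairSieve h (M ^ 2) N).totalMass = N := rfl
  rw [htm] at hsieve
  push_cast at hsieve hcard
  rw [← pow_mul] at hsieve
  norm_num at hsieve
  linarith

/-! ### Integers that are not of the form `π(k n)` -/

/-- Chebyshev's lower bound for the prime-counting function, with a non-optimal constant. -/
theorem primeCounting_ge {N : ℕ} (hN : 100 ≤ N) :
    (N : ℝ) / 4 / Real.log N ≤ Nat.primeCounting N := by
  refine le_trans ?_ (Chebyshev.pi_ge N)
  have hN' : (100 : ℝ) ≤ N := by exact_mod_cast hN
  have hlog : 0 < Real.log N := Real.log_pos (by linarith)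
  have h2 := Real.log_two_gt_d9
  have h2' := Real.log_two_lt_d9
  -- The tangent of `log` at `8` shows that `log (N + 1)` is at most a small multiple of `N`.
  have h1 : Real.log ((N + 1 : ℝ) / 8) ≤ (N + 1) / 8 - 1 :=
    Real.log_le_sub_one_of_pos (by positivity)
  rw [Real.log_div (by positivity) (by norm_num), show (8 : ℝ) = 2 ^ 3 by norm_num,
    Real.log_pow] at h1
  push_cast at h1
  gcongr
  nlinarith

/-- If `a + 1` is not of the form `π(k n)`, then the consecutive primes `p`, `q` of (zero-based)
indices `a`, `a + 1` satisfy `q < p + n`: otherwise `[p, q)`, on which `π` equals `a + 1`, would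
contain a multiple of `n`. -/
theorem nth_prime_succ_lt_of_forall_ne {n a : ℕ} (hn : 0 < n)
    (ha : ¬ ∃ k : ℕ, 0 < k ∧ Nat.primeCounting (k * n) = a + 1) :
    Nat.nth Nat.Prime (a + 1) < Nat.nth Nat.Prime a + n := by
  by_contra! hcon
  apply ha
  have hp := (Nat.prime_nth_prime a).pos
  -- The multiple of `n` in `[p, p + n)`
  refine ⟨(Nat.nth Nat.Prime a + n - 1) / n, ?_, ?_⟩
  · exact Nat.div_pos (by omega) hn
  · set m := (Nat.nth Nat.Prime a + n - 1) / n * n with hm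
    have hmod := Nat.div_add_mod' (Nat.nth Nat.Prime a + n - 1) n
    have hlt := Nat.mod_lt (Nat.nth Nat.Prime a + n - 1) hn
    have h1 : Nat.nth Nat.Prime a ≤ m := by omega
    have h2 : m + 1 ≤ Nat.nth Nat.Prime (a + 1) := by omega
    apply le_antisymm
    · have := Nat.monotone_primeCounting' h2
      rwa [Nat.primeCounting'_nth_eq] at this
    · have : Nat.primeCounting' (Nat.nth Nat.Prime a + 1) ≤ Nat.primeCounting' (m + 1) :=
        Nat.monotone_primeCounting' (by omega)
      rwa [Nat.primeCounting', Nat.count_nth_succ_of_infinite Nat.infinite_setOfPred_prime] at this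

open Classical in
/-- The integers up to `X` missing from `{π(k n) : k ≥ 1}` number `O_n(X / log X)`. A missing `a`
is sent to the `a`-th prime, which is the smaller member of a prime pair with difference below `n`.
These primes lie below `N`, the prime of zero-based index `X`, and `N / log N = O(X)`. -/
theorem card_missing_le (n : ℕ) (hn : 0 < n) :
    ∃ C : ℝ, 0 ≤ C ∧ ∀ X : ℕ, 100 ≤ X →
      (((Finset.Icc 1 X).filter fun a =>
        ¬ ∃ k : ℕ, 0 < k ∧ Nat.primeCounting (k * n) = a).card : ℝ) ≤ C * (X / Real.log X) := by
  have hK : ∀ h : ℕ, ∃ K : ℝ, 0 ≤ K ∧ ∀ N : ℕ, 2 ≤ N → 0 < h →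
      (((Finset.range N).filter fun p => p.Prime ∧ (p + h).Prime).card : ℝ) ≤
        K * (N / Real.log N ^ 2) := by
    intro h
    rcases h.eq_zero_or_pos with rfl | hh
    · exact ⟨0, le_rfl, fun _ _ h => absurd h (lt_irrefl 0)⟩
    · obtain ⟨K, hK0, hK⟩ := card_prime_pairs_le h hh
      exact ⟨K, hK0, fun N hN _ => hK N hN⟩
  choose K hK0 hK using hK
  have hK0' : 0 ≤ ∑ h ∈ Finset.Ico 1 n, K h := Finset.sum_nonneg fun h _ => hK0 h
  refine ⟨(∑ h ∈ Finset.Ico 1 n, K h) * 8, by positivity, fun X hX => ?_⟩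
  set N := Nat.nth Nat.Prime X with hN
  have hXN : X + 2 ≤ N := Nat.add_two_le_nth_prime X
  have hpiN : Nat.primeCounting N = X + 1 := by
    rw [Nat.primeCounting, Nat.primeCounting',
      Nat.count_nth_succ_of_infinite Nat.infinite_setOfPred_prime]
  have hmono := Nat.nth_strictMono Nat.infinite_setOfPred_prime
  have hcard : ((Finset.Icc 1 X).filter fun a =>
        ¬ ∃ k : ℕ, 0 < k ∧ Nat.primeCounting (k * n) = a).card ≤
      ∑ h ∈ Finset.Ico 1 n,
        ((Finset.range N).filter fun p => p.Prime ∧ (p + h).Prime).card := by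
    refine le_trans ?_ (Finset.card_biUnion_le)
    apply Finset.card_le_card_of_injOn (fun a => Nat.nth Nat.Prime (a - 1))
    · intro a ha
      simp only [Finset.coe_filter, Finset.mem_Icc, Set.mem_ofPred_eq] at ha
      obtain ⟨⟨ha1, haX⟩, hna⟩ := ha
      obtain ⟨b, rfl⟩ : ∃ b, a = b + 1 := ⟨a - 1, by omega⟩
      have hgap := nth_prime_succ_lt_of_forall_ne hn hna
      have hlt := hmono (Nat.lt_succ_self b)
      have hbN : Nat.nth Nat.Prime b < N := hmono (by omega)
      have hlt' : Nat.nth Nat.Prime b < Nat.nth Nat.Prime (b + 1) := hlt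
      rw [Finset.mem_coe, Finset.mem_biUnion]
      refine ⟨Nat.nth Nat.Prime (b + 1) - Nat.nth Nat.Prime b,
        Finset.mem_Ico.2 ⟨by omega, by omega⟩,
        Finset.mem_filter.2 ⟨Finset.mem_range.2 hbN, Nat.prime_nth_prime b, ?_⟩⟩
      change (Nat.nth Nat.Prime b + _).Prime
      rw [Nat.add_sub_cancel' hlt'.le]
      exact Nat.prime_nth_prime _
    · intro a ha b hb hab
      simp only [Finset.coe_filter, Finset.mem_Icc, Set.mem_ofPred_eq] at ha hb
      have := hmono.injective hab
      omega
  have hX' : (100 : ℝ) ≤ X := by exact_mod_cast hX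
  have hN' : (X : ℝ) ≤ N := by exact_mod_cast (by omega : X ≤ N)
  have hlogX : 0 < Real.log X := Real.log_pos (by linarith)
  have hlog : Real.log X ≤ Real.log N := Real.log_le_log (by linarith) hN'
  have hlogN : 0 < Real.log N := hlogX.trans_le hlog
  have hpi := primeCounting_ge (N := N) (by omega)
  rw [hpiN] at hpi
  push_cast at hpi
  have hfin : (N : ℝ) / Real.log N ^ 2 ≤ 8 * (X / Real.log X) := by
    calc (N : ℝ) / Real.log N ^ 2 = 4 * (N / 4 / Real.log N) / Real.log N := by field_simp
      _ ≤ 4 * (X + 1) / Real.log X := by gcongr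
      _ ≤ 4 * (X + X) / Real.log X := by gcongr; linarith
      _ = _ := by ring
  calc _ ≤ ((∑ h ∈ Finset.Ico 1 n,
        ((Finset.range N).filter fun p => p.Prime ∧ (p + h).Prime).card : ℕ) : ℝ) := by
        exact_mod_cast hcard
    _ ≤ ∑ h ∈ Finset.Ico 1 n, K h * (N / Real.log N ^ 2) := by
        push_cast
        exact Finset.sum_le_sum fun h hh => hK h N (by omega) (Finset.mem_Ico.1 hh).1
    _ = (∑ h ∈ Finset.Ico 1 n, K h) * (N / Real.log N ^ 2) := by rw [Finset.sum_mul]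
    _ ≤ (∑ h ∈ Finset.Ico 1 n, K h) * (8 * (X / Real.log X)) := by gcongr
    _ = _ := by ring

open Classical in
theorem stmt_8 (S : Set ℕ)
    (hS : Filter.Tendsto
      (fun x : ℝ => (((Finset.Icc 1 ⌊x⌋₊).filter (fun a => a ∈ S)).card : ℝ) / (x / Real.log x))
      Filter.atTop Filter.atTop)
    (n : ℕ) (hn : 0 < n) :
    {a : ℕ | a ∈ S ∧ ∃ k : ℕ, 0 < k ∧ Nat.primeCounting (k * n) = a}.Infinite := by
  intro hfin
  obtain ⟨C, hC, hmiss⟩ := card_missing_le n hn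
  set F := hfin.toFinset with hF
  have hS' := hS.comp (tendsto_natCast_atTop_atTop (R := ℝ))
  obtain ⟨X, hlarge, hX⟩ := ((hS'.eventually_gt_atTop (C + F.card)).and
    (Filter.eventually_ge_atTop 100)).exists
  simp only [Function.comp_apply, Nat.floor_natCast] at hlarge
  have hX' : (100 : ℝ) ≤ X := by exact_mod_cast hX
  have hlogX : 0 < Real.log X := Real.log_pos (by linarith)
  have hlogle : Real.log X ≤ X := (Real.log_le_sub_one_of_pos (by linarith)).trans (by linarith)
  have hone : 1 ≤ X / Real.log X := by rwa [le_div_iff₀ hlogX, one_mul]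
  have hsub : (Finset.Icc 1 X).filter (fun a => a ∈ S) ⊆
      F ∪ (Finset.Icc 1 X).filter fun a =>
        ¬ ∃ k : ℕ, 0 < k ∧ Nat.primeCounting (k * n) = a := by
    intro a ha
    rw [Finset.mem_filter] at ha
    by_cases h : ∃ k : ℕ, 0 < k ∧ Nat.primeCounting (k * n) = a
    · exact Finset.mem_union_left _ (hfin.mem_toFinset.2 ⟨ha.2, h⟩)
    · exact Finset.mem_union_right _ (Finset.mem_filter.2 ⟨ha.1, h⟩)
  have hcard : (((Finset.Icc 1 X).filter (fun a => a ∈ S)).card : ℝ) ≤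
      F.card + C * (X / Real.log X) := by
    have h1 := (Finset.card_le_card hsub).trans (Finset.card_union_le _ _)
    have h2 : (((Finset.Icc 1 X).filter (fun a => a ∈ S)).card : ℝ) ≤
      F.card + ((Finset.Icc 1 X).filter fun a =>
        ¬ ∃ k : ℕ, 0 < k ∧ Nat.primeCounting (k * n) = a).card := by exact_mod_cast h1
    linarith [hmiss X hX]
  rw [lt_div_iff₀ (by linarith)] at hlarge
  have : (F.card : ℝ) ≤ F.card * (X / Real.log X) := le_mul_of_one_le_right (by positivity) hone
  nlinarith
end

section
/- For any positive integers n, m, r, there are infinitely many a ∈ A_n with a ≡ r (mod m). -/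
/-!
Write `p_a` for the `a`-th prime. The value `a` belongs to `A_n` as soon as the interval
`[p_a, p_{a+1})` contains a multiple of `n`, which is automatic when `p_{a+1} - p_a ≥ n`
(`exists_multiple_between`). So it is enough to find, in every residue class mod `m`, infinitely
many indices with prime gap at least `n` (`exists_large_gap`).

If all late enough indices in some class had gap less than `n`, then primes `p` for which some
`p + h` with `0 < h < n` is prime would have lower Dirichlet density at least `1 / m`:
`p ↦ log p / p ^ x` is decreasing from `p = 3` on, so each of the `m` classes of indices carries
at least `1 / m` of the divergent sum `∑ log p / p ^ x ~ 1 / (x - 1)` (`tsum_prog_ge`).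
But such primes lie, with finitely many exceptions, in the classes `b` mod `Q` such that `b` and
some `b + h` are units. If `Q` is a product of distinct primes `q ≥ n`, each `h` accounts for a
fraction `∏ (q - 2) / (q - 1) ≤ exp (-∑ 1 / q)` of the units. Since `∑ 1 / q` diverges, `Q` can be
chosen so that the total fraction is less than `1 / m` (`exists_modulus`). By the analytic input
to Dirichlet's theorem each unit class mod `Q` has Dirichlet density `1 / φ(Q)`
(`residueClass_tsum_le`), a contradiction. In this way only the density of primes in a fixed
modulus is needed, and no sieve bound for prime pairs.
-/

open ArithmeticFunction ArithmeticFunction.vonMangoldt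

/-! ### Dirichlet series over primes -/

/-- The upper bound that complements `LSeries_residueClass_lower_bound`; both come from continuity
of `LFunctionResidueClassAux` up to the line `re s = 1`. -/
lemma residueClass_tsum_le {q : ℕ} [NeZero q] {a : ZMod q} (ha : IsUnit a) :
    ∃ C : ℝ, ∀ x ∈ Set.Ioc (1 : ℝ) 2,
      ∑' n, residueClass a n / (n : ℝ) ^ x ≤ (q.totient : ℝ)⁻¹ / (x - 1) + C := by
  have H {x : ℝ} (hx : 1 < x) :
      ∑' n, residueClass a n / (n : ℝ) ^ x =
        (LFunctionResidueClassAux a x).re + (q.totient : ℝ)⁻¹ / (x - 1) := by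
    refine Complex.ofReal_injective ?_
    simp only [Complex.ofReal_tsum, Complex.ofReal_div, Complex.ofReal_cpow (Nat.cast_nonneg _),
      Complex.ofReal_natCast, Complex.ofReal_add, Complex.ofReal_inv, Complex.ofReal_sub,
      Complex.ofReal_one]
    simp_rw [← LFunctionResidueClassAux_real ha hx,
      eqOn_LFunctionResidueClassAux ha <| Set.mem_ofPred.mpr (Complex.ofReal_re x ▸ hx),
      sub_add_cancel, LSeries, LSeries.term]
    refine tsum_congr fun n ↦ ?_
    split_ifs with hn
    · simp only [hn, residueClass_apply_zero, Complex.ofReal_zero, zero_div]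
    · rfl
  have hcont : ContinuousOn (fun x : ℝ ↦ (LFunctionResidueClassAux a x).re) (Set.Icc 1 2) :=
    Complex.continuous_re.continuousOn.comp (t := Set.univ)
      (continuousOn_LFunctionResidueClassAux a) (fun _ _ ↦ trivial) |>.comp
      Complex.continuous_ofReal.continuousOn fun x hx ↦ by
        simpa only [Set.mem_ofPred_eq, Complex.ofReal_re] using hx.1
  obtain ⟨C, hC⟩ := bddAbove_def.mp <| IsCompact.bddAbove_image isCompact_Icc hcont
  refine ⟨C, fun x hx ↦ ?_⟩
  rw [H hx.1, add_comm]
  have := hC _ (Set.mem_image_of_mem _ (Set.mem_Icc_of_Ioc hx))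
  gcongr

lemma residueClass_summable {q : ℕ} (a : ZMod q) {x : ℝ} (hx : 1 < x) :
    Summable fun n : ℕ ↦ residueClass a n / (n : ℝ) ^ x :=
  LSeries.summable_real_of_abscissaOfAbsConv_lt <|
    (abscissaOfAbsConv_residueClass_le_one a).trans_lt <| mod_cast hx

/-- The term `log p / p ^ x` of the Dirichlet series of `Λ` at the prime `p` of index `k`, where
indices start at `0` (so `k = 0` is the prime `2`). -/
noncomputable def primeWeight (x : ℝ) (k : ℕ) : ℝ :=
  Real.log (Nat.nth Nat.Prime k) / (Nat.nth Nat.Prime k : ℝ) ^ x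

lemma primeWeight_nonneg (x : ℝ) (k : ℕ) : 0 ≤ primeWeight x k := by
  unfold primeWeight
  have : 0 ≤ Real.log (Nat.nth Nat.Prime k) := Real.log_natCast_nonneg _
  positivity

lemma nth_prime_injective : Function.Injective (Nat.nth Nat.Prime) :=
  Nat.nth_injective Nat.infinite_setOfPred_prime

lemma primeWeight_eq_residueClass (x : ℝ) (k : ℕ) :
    primeWeight x k = residueClass ((Nat.nth Nat.Prime k : ℕ) : ZMod 1) (Nat.nth Nat.Prime k) /
      ((Nat.nth Nat.Prime k : ℕ) : ℝ) ^ x := by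
  simp [primeWeight, residueClass, vonMangoldt_apply_prime (Nat.prime_nth_prime k)]

lemma primeWeight_summable {x : ℝ} (hx : 1 < x) : Summable (primeWeight x) := by
  have := (residueClass_summable (0 : ZMod 1) hx).comp_injective nth_prime_injective
  refine this.congr fun k ↦ ?_
  rw [primeWeight_eq_residueClass]
  simp [Subsingleton.elim _ (0 : ZMod 1)]

/-- The pole of `-ζ'/ζ` at `1`, carried by the primes alone: proper prime powers contribute a
bounded amount. The modulus `1` in the proof makes the residue class everything. -/
lemma primeWeight_tsum_ge :
    ∃ C : ℝ, ∀ x ∈ Set.Ioc (1 : ℝ) 2, 1 / (x - 1) - C ≤ ∑' k, primeWeight x k := by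
  have hu : IsUnit (0 : ZMod 1) := isUnit_of_subsingleton _
  obtain ⟨C, hC⟩ := LSeries_residueClass_lower_bound hu
  have hs := summable_residueClass_non_primes_div (0 : ZMod 1)
  refine ⟨C + ∑' n : ℕ, (if n.Prime then 0 else residueClass (0 : ZMod 1) n) / (n : ℝ),
    fun x hx ↦ ?_⟩
  have h1 := hC hx
  have hR := residueClass_summable (0 : ZMod 1) hx.1
  set f : ℕ → ℝ := fun n ↦ residueClass (0 : ZMod 1) n / (n : ℝ) ^ x with hf
  have hf0 (n : ℕ) : 0 ≤ f n := by
    have := residueClass_nonneg (0 : ZMod 1) n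
    positivity
  have hP : ∑' k, primeWeight x k = ∑' n, {n : ℕ | n.Prime}.indicator f n := by
    rw [← nth_prime_injective.tsum_eq (f := {n : ℕ | n.Prime}.indicator f)]
    · refine tsum_congr fun k ↦ ?_
      rw [Set.indicator_of_mem (show Nat.nth Nat.Prime k ∈ {n : ℕ | n.Prime} from
        Nat.prime_nth_prime k), primeWeight_eq_residueClass]
      simp [hf, Subsingleton.elim _ (0 : ZMod 1)]
    · refine Set.support_indicator_subset.trans fun n hn ↦ ?_
      exact ⟨_, Nat.nth_count hn⟩
  have hle (n : ℕ) : f n ≤ {n : ℕ | n.Prime}.indicator f n +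
      (if n.Prime then 0 else residueClass (0 : ZMod 1) n) / (n : ℝ) := by
    by_cases hn : n.Prime
    · simp [hn]
    · simp only [Set.indicator, Set.mem_ofPred_eq, hn, if_false, zero_add, hf]
      rcases n.eq_zero_or_pos with rfl | hn
      · simp
      · refine div_le_div_of_nonneg_left (residueClass_nonneg _ _) (mod_cast hn) ?_
        conv_lhs => rw [← Real.rpow_one n]
        exact Real.rpow_le_rpow_of_exponent_le (by norm_cast) hx.1.le
  have h2 := hR.tsum_le_tsum hle ((hR.indicator _).add hs)
  rw [(hR.indicator _).tsum_add hs, ← hP] at h2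
  simp only [Nat.totient_one, Nat.cast_one, inv_one] at h1
  linarith

/-- The index `0` is excluded because `log t / t ^ x` decreases only from `t = exp (1 / x)` on,
which may exceed `2`. -/
lemma primeWeight_antitone {x : ℝ} (hx : 1 < x) {i j : ℕ} (hi : 1 ≤ i) (hij : i ≤ j) :
    primeWeight x j ≤ primeWeight x i := by
  have h3 : 3 ≤ Nat.nth Nat.Prime i := by
    have := Nat.add_two_le_nth_prime i
    omega
  have hmono : Nat.nth Nat.Prime i ≤ Nat.nth Nat.Prime j :=
    Nat.nth_monotone Nat.infinite_setOfPred_prime hij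
  have he : Real.exp x⁻¹ ≤ 3 := by
    have : Real.exp x⁻¹ ≤ Real.exp 1 := Real.exp_le_exp.mpr (inv_le_one_of_one_le₀ hx.le)
    linarith [Real.exp_one_lt_d9]
  have h3' : (3 : ℝ) ≤ Nat.nth Nat.Prime i := by exact_mod_cast h3
  have hm' : (Nat.nth Nat.Prime i : ℝ) ≤ Nat.nth Nat.Prime j := by exact_mod_cast hmono
  exact Real.log_div_self_rpow_antitoneOn (by linarith)
    (Set.mem_ofPred.mpr (he.trans h3')) (Set.mem_ofPred.mpr (he.trans (h3'.trans hm'))) hm'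

lemma sum_range_mul_le (f : ℕ → ℝ) (m : ℕ) (hf : ∀ i j, i ≤ j → f j ≤ f i) (N : ℕ) :
    ∑ i ∈ Finset.range (m * N), f i ≤ m * ∑ j ∈ Finset.range N, f (m * j) := by
  induction N with
  | zero => simp
  | succ N ih =>
    rw [mul_add, mul_one, Finset.sum_range_add, Finset.sum_range_succ, mul_add]
    have : ∑ i ∈ Finset.range m, f (m * N + i) ≤ ∑ i ∈ Finset.range m, f (m * N) :=
      Finset.sum_le_sum fun i _ ↦ hf _ _ (by omega)
    simp only [Finset.sum_const, Finset.card_range, nsmul_eq_mul] at this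
    linarith

/-- The primes whose index lies in a progression of difference `m` have lower Dirichlet density at
least `1 / m`. -/
lemma tsum_prog_ge (K m : ℕ) (hK : 1 ≤ K) (hm : 0 < m) :
    ∃ C : ℝ, ∀ x ∈ Set.Ioc (1 : ℝ) 2, 1 / (x - 1) - C ≤ m * ∑' j, primeWeight x (K + m * j) := by
  obtain ⟨C, hC⟩ := primeWeight_tsum_ge
  refine ⟨C + ∑ k ∈ Finset.range K, Real.log (Nat.nth Nat.Prime k), fun x hx ↦ ?_⟩
  have hs := primeWeight_summable hx.1
  have h1 := hC x hx
  rw [← hs.sum_add_tsum_nat_add K] at h1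
  have h2 : ∑ k ∈ Finset.range K, primeWeight x k ≤
      ∑ k ∈ Finset.range K, Real.log (Nat.nth Nat.Prime k) := by
    refine Finset.sum_le_sum fun k _ ↦ div_le_self (Real.log_natCast_nonneg _) ?_
    refine Real.one_le_rpow ?_ (by linarith [hx.1])
    exact_mod_cast (Nat.prime_nth_prime k).one_lt.le
  have hinj : Function.Injective fun j ↦ K + m * j := fun a b h ↦ by
    have h' : m * a = m * b := Nat.add_left_cancel h
    exact Nat.eq_of_mul_eq_mul_left hm h'
  have hs' : Summable fun j ↦ primeWeight x (K + m * j) := hs.comp_injective hinj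
  have h3 : ∑' k, primeWeight x (k + K) ≤ m * ∑' j, primeWeight x (K + m * j) := by
    refine Real.tsum_le_of_sum_range_le (fun k ↦ primeWeight_nonneg _ _) fun N ↦ ?_
    calc ∑ i ∈ Finset.range N, primeWeight x (i + K)
        ≤ ∑ i ∈ Finset.range (m * N), primeWeight x (i + K) :=
          Finset.sum_le_sum_of_subset_of_nonneg
            (Finset.range_subset_range.mpr (Nat.le_mul_of_pos_left _ hm))
            fun _ _ _ ↦ primeWeight_nonneg _ _
      _ ≤ m * ∑ j ∈ Finset.range N, primeWeight x (m * j + K) :=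
          sum_range_mul_le (fun i ↦ primeWeight x (i + K)) m
            (fun i j hij ↦ primeWeight_antitone hx.1 (by omega) (by omega)) N
      _ ≤ m * ∑' j, primeWeight x (K + m * j) := by
          gcongr
          simp only [add_comm _ K]
          exact hs'.sum_le_tsum _ fun _ _ ↦ primeWeight_nonneg _ _
  linarith

/-! ### Residue classes that can contain the smaller member of a prime pair -/

/-- The number of residue classes `b` mod `Q` such that both `b` and `b + h` are units. -/
noncomputable def pairCount (h Q : ℕ) : ℕ :=
  Nat.card {b : ZMod Q // IsUnit b ∧ IsUnit (b + (h : ZMod Q))}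

lemma pairCount_mul (h : ℕ) {Q R : ℕ} (hQR : Q.Coprime R) :
    pairCount h (Q * R) = pairCount h Q * pairCount h R := by
  unfold pairCount
  rw [← Nat.card_prod]
  let e := ZMod.chineseRemainder hQR
  refine Nat.card_congr ((e.toEquiv.subtypeEquiv (q := fun c : ZMod Q × ZMod R ↦
    (IsUnit c.1 ∧ IsUnit (c.1 + (h : ZMod Q))) ∧ (IsUnit c.2 ∧ IsUnit (c.2 + (h : ZMod R))))
    fun b ↦ ?_).trans (Equiv.subtypeProdEquivProd
    (p := fun b : ZMod Q ↦ IsUnit b ∧ IsUnit (b + (h : ZMod Q)))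
    (q := fun b : ZMod R ↦ IsUnit b ∧ IsUnit (b + (h : ZMod R)))))
  have h1 : IsUnit b ↔ IsUnit (e b) := (MulEquiv.isUnit_map e).symm
  have h2 : IsUnit (b + (h : ZMod (Q * R))) ↔ IsUnit (e b + (h : ZMod Q × ZMod R)) := by
    rw [← map_natCast e h, ← map_add]; exact (MulEquiv.isUnit_map e).symm
  rw [h1, h2, Prod.isUnit_iff, Prod.isUnit_iff]
  simp only [Prod.fst_add, Prod.snd_add, Prod.fst_natCast, Prod.snd_natCast, RingEquiv.toEquiv_eq_coe,
    EquivLike.coe_coe]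
  tauto

lemma pairCount_prime {h q : ℕ} (hq : q.Prime) (hh : ¬ q ∣ h) : pairCount h q = q - 2 := by
  have : Fact q.Prime := ⟨hq⟩
  have hne : (0 : ZMod q) ≠ -(h : ZMod q) := by
    rw [ne_comm, neg_ne_zero, Ne, ZMod.natCast_eq_zero_iff]; exact hh
  classical
  unfold pairCount
  rw [Nat.card_eq_fintype_card, Fintype.card_subtype]
  have : (Finset.univ.filter fun b : ZMod q ↦ IsUnit b ∧ IsUnit (b + (h : ZMod q))) =
      ({0, -(h : ZMod q)} : Finset (ZMod q))ᶜ := by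
    ext b
    simp [add_eq_zero_iff_eq_neg]
  rw [this, Finset.card_compl, Finset.card_pair hne, ZMod.card]

lemma pairCount_prod_le (h : ℕ) (T : Finset ℕ) (hT : ∀ q ∈ T, q.Prime ∧ ¬ q ∣ h) :
    (pairCount h (∏ q ∈ T, q) : ℝ) ≤
      Real.exp (-∑ q ∈ T, (1 / q : ℝ)) * (Nat.totient (∏ q ∈ T, q) : ℝ) := by
  induction T using Finset.induction_on with
  | empty =>
    simp only [Finset.prod_empty, Finset.sum_empty, neg_zero, Real.exp_zero, Nat.totient_one]
    have : pairCount h 1 ≤ 1 := by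
      unfold pairCount
      exact Finite.card_le_one_iff_subsingleton.mpr inferInstance
    simpa using this
  | insert q T hqT ih =>
    have hq := hT q (Finset.mem_insert_self q T)
    have hco : q.Coprime (∏ q ∈ T, q) := Nat.Coprime.prod_right fun p hp ↦
      (Nat.coprime_primes hq.1 (hT p (Finset.mem_insert_of_mem hp)).1).mpr
        fun h ↦ hqT (h ▸ hp)
    have ih := ih fun p hp ↦ hT p (Finset.mem_insert_of_mem hp)
    rw [Finset.prod_insert hqT, Finset.sum_insert hqT, pairCount_mul h hco,
      Nat.totient_mul hco, pairCount_prime hq.1 hq.2, Nat.totient_prime hq.1, neg_add, Real.exp_add]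
    have hq2 : (2 : ℝ) ≤ q := by exact_mod_cast hq.1.two_le
    have hexp : 1 - 1 / (q : ℝ) ≤ Real.exp (-(1 / q)) := by
      linarith [Real.add_one_le_exp (-(1 / q : ℝ))]
    have key : ((q - 2 : ℕ) : ℝ) ≤ Real.exp (-(1 / q)) * ((q - 1 : ℕ) : ℝ) := by
      rw [Nat.cast_sub hq.1.two_le, Nat.cast_sub hq.1.one_le]
      push_cast
      have h1 : (q : ℝ) - 2 ≤ (1 - 1 / q) * (q - 1) := by
        have : (1 - 1 / (q : ℝ)) * (q - 1) = q - 2 + 1 / q := by field_simp; ring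
        rw [this]; linarith [show (0 : ℝ) ≤ 1 / q by positivity]
      exact h1.trans (mul_le_mul_of_nonneg_right hexp (by linarith))
    push_cast
    calc _ ≤ (Real.exp (-(1 / q)) * ((q - 1 : ℕ) : ℝ)) *
          (Real.exp (-∑ q ∈ T, (1 / q : ℝ)) * (Nat.totient (∏ q ∈ T, q) : ℝ)) := by gcongr
      _ = _ := by ring

lemma exists_primes_sum_gt (n : ℕ) (M : ℝ) :
    ∃ T : Finset ℕ, (∀ q ∈ T, q.Prime ∧ n ≤ q) ∧ M < ∑ q ∈ T, (1 / q : ℝ) := by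
  set f : ℕ → ℝ := Set.indicator {p : ℕ | p.Prime} (fun n : ℕ ↦ (1 : ℝ) / n) with hf
  have hf0 (n : ℕ) : 0 ≤ f n := Set.indicator_nonneg (fun _ _ ↦ by positivity) n
  have h := (not_summable_iff_tendsto_nat_atTop_of_nonneg hf0).mp not_summable_one_div_on_primes
  obtain ⟨N, hN, hnN⟩ := ((h.eventually_gt_atTop (M + ∑ i ∈ Finset.range n, f i)).and
    (Filter.eventually_ge_atTop n)).exists
  refine ⟨(Finset.Ico n N).filter Nat.Prime, fun q hq ↦ ?_, ?_⟩
  · simp only [Finset.mem_filter, Finset.mem_Ico] at hq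
    exact ⟨hq.2, hq.1.1⟩
  · rw [Finset.sum_filter, ← Finset.sum_range_add_sum_Ico f hnN] at *
    have : ∑ i ∈ Finset.Ico n N, f i = ∑ a ∈ Finset.Ico n N, if Nat.Prime a then (1 / a : ℝ) else 0 :=
      Finset.sum_congr rfl fun i _ ↦ by simp [hf, Set.indicator]
    linarith

/-- The set `B` contains every class mod `Q` in which a prime `p > Q` can have another prime less
than `n` above it, and makes up less than `1 / m` of the units. -/
lemma exists_modulus (n m : ℕ) :
    ∃ Q : ℕ, Q ≠ 0 ∧ ∃ B : Finset (ZMod Q), (∀ b ∈ B, IsUnit b) ∧ (m * B.card : ℝ) < Q.totient ∧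
      ∀ b : ZMod Q, IsUnit b → ∀ h : ℕ, 0 < h → h < n → IsUnit (b + (h : ZMod Q)) → b ∈ B := by
  obtain ⟨T, hT, hsum⟩ := exists_primes_sum_gt n (Real.log (m * n + 1))
  set Q := ∏ q ∈ T, q with hQ
  have hQ0 : Q ≠ 0 := Finset.prod_ne_zero_iff.mpr fun q hq ↦ (hT q hq).1.ne_zero
  have : NeZero Q := ⟨hQ0⟩
  classical
  let S (h : ℕ) : Finset (ZMod Q) :=
    Finset.univ.filter fun b ↦ IsUnit b ∧ IsUnit (b + (h : ZMod Q))
  have hS (h : ℕ) : (S h).card = pairCount h Q := by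
    rw [pairCount, Nat.card_eq_fintype_card, Fintype.card_subtype]
  refine ⟨Q, hQ0, (Finset.Ico 1 n).biUnion S, fun b hb ↦ ?_, ?_, fun b hb h h0 hn hbh ↦ ?_⟩
  · simp only [Finset.mem_biUnion, S, Finset.mem_filter] at hb
    obtain ⟨h, -, -, hb, -⟩ := hb
    exact hb
  · have hφ : (0 : ℝ) < Q.totient := by exact_mod_cast Nat.totient_pos.mpr (Nat.pos_of_ne_zero hQ0)
    have hpos : (0 : ℝ) < m * n + 1 := by positivity
    have hE : Real.exp (-∑ q ∈ T, (1 / q : ℝ)) ≤ 1 / (m * n + 1) := by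
      rw [one_div, ← Real.exp_log (inv_pos.mpr hpos), Real.log_inv]
      exact Real.exp_le_exp.mpr (by linarith)
    have hcard : (((Finset.Ico 1 n).biUnion S).card : ℝ) ≤ n * (1 / (m * n + 1) * Q.totient) := by
      calc (((Finset.Ico 1 n).biUnion S).card : ℝ) ≤ ∑ h ∈ Finset.Ico 1 n, ((S h).card : ℝ) := by
            exact_mod_cast Finset.card_biUnion_le
        _ ≤ ∑ h ∈ Finset.Ico 1 n, (1 / (m * n + 1) * Q.totient : ℝ) := by
            refine Finset.sum_le_sum fun h hh ↦ ?_
            rw [hS]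
            refine (pairCount_prod_le h T fun q hq ↦ ⟨(hT q hq).1, fun hd ↦ ?_⟩).trans ?_
            · rw [Finset.mem_Ico] at hh
              have := Nat.le_of_dvd hh.1 hd
              have := (hT q hq).2
              omega
            · gcongr
        _ ≤ _ := by
            rw [Finset.sum_const, Nat.card_Ico, nsmul_eq_mul]
            gcongr
            exact Nat.sub_le _ _
    calc (m * ((Finset.Ico 1 n).biUnion S).card : ℝ)
        ≤ m * (n * (1 / (m * n + 1) * Q.totient)) := by gcongr
      _ = (m * n) / (m * n + 1) * Q.totient := by ring
      _ < 1 * Q.totient := by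
          gcongr
          rw [div_lt_one hpos]; linarith
      _ = Q.totient := one_mul _
  · simp only [Finset.mem_biUnion, S, Finset.mem_filter, Finset.mem_Ico]
    exact ⟨h, ⟨h0, hn⟩, Finset.mem_univ _, hb, hbh⟩

/-! ### Large prime gaps in a progression of indices -/

lemma isUnit_of_prime_gt {p Q : ℕ} (hp : p.Prime) (hQ : Q ≠ 0) (hpQ : Q < p) :
    IsUnit (p : ZMod Q) := by
  rw [ZMod.isUnit_iff_coprime]
  exact Nat.coprime_of_lt_prime hQ hpQ hp

lemma exists_large_gap (n m K : ℕ) (hm : 0 < m) :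
    ∃ j, Nat.nth Nat.Prime (K + m * j) + n ≤ Nat.nth Nat.Prime (K + m * j + 1) := by
  by_contra! hcon
  obtain ⟨Q, hQ0, B, hBu, hBcard, hB⟩ := exists_modulus n m
  have : NeZero Q := ⟨hQ0⟩
  -- The progression is started later, so that all its primes exceed `Q` and hence are units.
  set L := K + m * (Q + 1) with hL
  have hLQ : Q + 1 ≤ L := by nlinarith
  have hmem (j : ℕ) : ((Nat.nth Nat.Prime (L + m * j) : ℕ) : ZMod Q) ∈ B := by
    have e : L + m * j = K + m * (Q + 1 + j) := by rw [hL]; ring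
    have hlt := hcon (Q + 1 + j)
    rw [← e] at hlt
    have hgt : Nat.nth Nat.Prime (L + m * j) < Nat.nth Nat.Prime (L + m * j + 1) :=
      Nat.nth_strictMono Nat.infinite_setOfPred_prime (Nat.lt_succ_self _)
    have hQp : Q < Nat.nth Nat.Prime (L + m * j) := by
      have := Nat.add_two_le_nth_prime (L + m * j)
      omega
    refine hB _ (isUnit_of_prime_gt (Nat.prime_nth_prime _) hQ0 hQp)
      (Nat.nth Nat.Prime (L + m * j + 1) - Nat.nth Nat.Prime (L + m * j)) (by omega) (by omega) ?_
    rw [← Nat.cast_add, Nat.add_sub_cancel' hgt.le]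
    exact isUnit_of_prime_gt (Nat.prime_nth_prime _) hQ0 (hQp.trans hgt)
  obtain ⟨C, hC⟩ := tsum_prog_ge L m (by omega) hm
  have hup (b : ZMod Q) (hb : b ∈ B) := residueClass_tsum_le (hBu b hb)
  choose! D hD using hup
  have hinj : Function.Injective fun j ↦ Nat.nth Nat.Prime (L + m * j) := fun a b h ↦ by
    have h' : m * a = m * b := Nat.add_left_cancel (nth_prime_injective h)
    exact Nat.eq_of_mul_eq_mul_left hm h'
  have hupper (x : ℝ) (hx : x ∈ Set.Ioc (1 : ℝ) 2) :
      ∑' j, primeWeight x (L + m * j) ≤ B.card * ((Q.totient : ℝ)⁻¹ / (x - 1)) + ∑ b ∈ B, D b := by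
    have hsb (b : ZMod Q) : Summable fun j ↦ residueClass b (Nat.nth Nat.Prime (L + m * j)) /
        ((Nat.nth Nat.Prime (L + m * j) : ℕ) : ℝ) ^ x :=
      (residueClass_summable b hx.1).comp_injective hinj
    have heq (j : ℕ) : primeWeight x (L + m * j) =
        ∑ b ∈ B, residueClass b (Nat.nth Nat.Prime (L + m * j)) /
          ((Nat.nth Nat.Prime (L + m * j) : ℕ) : ℝ) ^ x := by
      rw [Finset.sum_eq_single_of_mem _ (hmem j)]
      · simp [primeWeight, residueClass, vonMangoldt_apply_prime (Nat.prime_nth_prime _)]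
      · intro b _ hb
        simp [residueClass, Set.indicator, hb.symm]
    calc ∑' j, primeWeight x (L + m * j)
        = ∑ b ∈ B, ∑' j, residueClass b (Nat.nth Nat.Prime (L + m * j)) /
          ((Nat.nth Nat.Prime (L + m * j) : ℕ) : ℝ) ^ x := by
          rw [← Summable.tsum_finsetSum fun b _ ↦ hsb b]
          exact tsum_congr heq
      _ ≤ ∑ b ∈ B, ((Q.totient : ℝ)⁻¹ / (x - 1) + D b) := by
          refine Finset.sum_le_sum fun b hb ↦ le_trans ?_ (hD b hb x hx)
          refine tsum_comp_le_tsum_of_inj (residueClass_summable b hx.1) (fun n ↦ ?_) hinj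
          exact div_nonneg (residueClass_nonneg b n) (by positivity)
      _ = _ := by rw [Finset.sum_add_distrib, Finset.sum_const, nsmul_eq_mul]
  have hφ : (0 : ℝ) < Q.totient := by exact_mod_cast Nat.totient_pos.mpr (Nat.pos_of_ne_zero hQ0)
  set δ : ℝ := 1 - m * B.card * (Q.totient : ℝ)⁻¹ with hδ
  have hδ0 : 0 < δ := by
    rw [hδ, sub_pos, ← div_eq_mul_inv, div_lt_one hφ]; exact hBcard
  set E : ℝ := C + m * ∑ b ∈ B, D b with hE
  -- The bounds `1 / (x - 1)` and `(1 - δ) / (x - 1)` clash as `x` tends to `1`.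
  have hfin (x : ℝ) (hx : x ∈ Set.Ioc (1 : ℝ) 2) : δ / (x - 1) ≤ E := by
    have h1 := hC x hx
    have h2 := mul_le_mul_of_nonneg_left (hupper x hx) (Nat.cast_nonneg (α := ℝ) m)
    have h3 : δ / (x - 1) = 1 / (x - 1) - m * (B.card * ((Q.totient : ℝ)⁻¹ / (x - 1))) := by
      rw [hδ]; ring
    rw [h3, hE]
    linarith
  have hE0 : 0 < E := lt_of_lt_of_le (by norm_num; exact hδ0) (hfin 2 (by norm_num))
  have hδE : δ ≤ E := by simpa [show (2 : ℝ) - 1 = 1 by norm_num] using hfin 2 (by norm_num)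
  -- At this `x` the quotient `δ / (x - 1)` equals `2 * E`.
  have := hfin (1 + δ / (2 * E)) ⟨by linarith [show 0 < δ / (2 * E) by positivity], by
    have : δ / (2 * E) ≤ 1 := by rw [div_le_one (by positivity)]; linarith
    linarith⟩
  rw [add_sub_cancel_left, div_div_cancel₀ hδ0.ne'] at this
  linarith

/-- With `i` counted from `0`, the value `π` takes on `[p_i, p_{i+1})` is `i + 1`. -/
lemma exists_multiple_between {n i : ℕ} (hn : 0 < n)
    (h : Nat.nth Nat.Prime i + n ≤ Nat.nth Nat.Prime (i + 1)) :
    ∃ k, 0 < k ∧ Nat.primeCounting (k * n) = i + 1 := by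
  set p := Nat.nth Nat.Prime i with hp
  have hp0 : 0 < p := (Nat.prime_nth_prime i).pos
  have hdiv := Nat.div_add_mod (p + n - 1) n
  have hmod := Nat.mod_lt (p + n - 1) hn
  rw [mul_comm] at hdiv
  -- The least multiple of `n` that is at least `p`.
  refine ⟨(p + n - 1) / n, Nat.div_pos (by omega) hn, ?_⟩
  set N := (p + n - 1) / n * n
  rw [Nat.primeCounting, Nat.primeCounting']
  apply le_antisymm
  · rw [Nat.count_le_iff_le_nth Nat.infinite_setOfPred_prime]
    change N + 1 ≤ Nat.nth Nat.Prime (i + 1)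
    omega
  · rw [Nat.succ_le_iff, Nat.lt_nth_iff_count_lt Nat.infinite_setOfPred_prime]
    change p < N + 1
    omega

theorem stmt_9 (n m r : ℕ) (hn : 0 < n) (hm : 0 < m) (hr : 0 < r) :
    {a : ℕ | (∃ k : ℕ, 0 < k ∧ Nat.primeCounting (k * n) = a) ∧ a ≡ r [MOD m]}.Infinite := by
  rw [Set.infinite_iff_exists_gt]
  intro M
  -- Index `r - 1` corresponds to `π = r`; the term `m * M` forces values above `M`.
  obtain ⟨j, hj⟩ := exists_large_gap n m (r - 1 + m * M) hm
  refine ⟨r - 1 + m * M + m * j + 1, ⟨exists_multiple_between hn hj, ?_⟩, ?_⟩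
  · have : r - 1 + m * M + m * j + 1 = r + m * (M + j) := by
      rw [mul_add]; omega
    rw [this]
    simp [Nat.ModEq]
  · have : M ≤ m * M := Nat.le_mul_of_pos_left _ hm
    omega
end
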